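/- (Fountain Theorem.) Let X be a real Banach space with a Schauder basis (e_j)_{j≥1}, i.e. every x ∈ X has a unique representation x = Σ_{j=1}^∞ a_j e_j with a_j ∈ ℝ and the partial sums converging to x in norm. For k ≥ 1 set Y_k = span{e_1, …, e_k} and Z_k = the closure of span{e_j : j ≥ k}. Let L : X → ℝ be a C¹ functional (Fréchet differentiable with continuous derivative dL : X → X*) which is even (L(−u) = L(u) for all u ∈ X) and satisfies the Palais–Smale (PS) condition. Suppose that for every k ∈ ℕ there exist ρ_k > r_k > 0 such that: (L₁) max{L(u) : u ∈ Y_k, ‖u‖ = ρ_k} ≤ 0; (L₂) b(k) := inf{L(u) : u ∈ Z_k, ‖u‖ = r_k} → +∞ as k → ∞. Then L possesses an unbounded sequence of critical values: there exist u_k ∈ X with dL(u_k) = 0 for every k and L(u_k) → +∞. -/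

import Mathlib

open Filter Topology

/-- `L` satisfies the Palais–Smale condition (w.r.t. the derivative `dL`). -/
def PalaisSmale {X : Type*} [NormedAddCommGroup X] [NormedSpace ℝ X]
    (L : X → ℝ) (dL : X → X →L[ℝ] ℝ) : Prop :=
  ∀ x : ℕ → X, (∃ M : ℝ, ∀ n, |L (x n)| ≤ M) →
    Tendsto (fun n => ‖dL (x n)‖) atTop (𝓝 0) →
    ∃ (y : X) (φ : ℕ → ℕ), StrictMono φ ∧ Tendsto (fun n => x (φ n)) atTop (𝓝 y)

/-! A symmetric min-max argument. Modulo two, simplicial chains on a vertex set form a polynomial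
ring over `ZMod 2`, with the join as product and a derivation as boundary. Counting alternating
simplices in subdivisions of the cross-polytope (Fan's lemma) shows that an odd map `ℝⁿ⁺¹ → ℝⁿ`
and an even function, negative at the origin and nonnegative far away, have a common zero. Since
`Z_k` has codimension less than `dim Y_k`, every odd map of the ball of radius `ρ_k` of `Y_k`
which is the identity on its boundary therefore meets the sphere of radius `r_k` of `Z_k`, so `L`
takes a value `≥ b(k)` on its image. Ekeland's principle on the complete space of these odd maps
gives almost critical points at levels `≥ b(k)`, and the Palais–Smale condition makes them
accumulate at a critical point.
-/

/-- Chains of the augmented simplicial chain complex over `ZMod 2` on the vertex set `V`. A monomial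
is the simplex whose vertices are its variables, so `1` is the empty simplex and multiplication is
the join. Degenerate simplices (monomials with a square factor) are kept, which makes every map of
vertices induce a chain map, namely `MvPolynomial.rename`. -/
abbrev SimplicialChain (V : Type*) := MvPolynomial V (ZMod 2)

namespace SimplicialChain

open MvPolynomial

variable {V W M : Type*} [AddCommGroup M] [Module (ZMod 2) M]

lemma map_mem_of_mem_restrictSupport {P : Set (V →₀ ℕ)} {N : Submodule (ZMod 2) M}
    (T : SimplicialChain V →ₗ[ZMod 2] M) (h : ∀ l ∈ P, T (monomial l 1) ∈ N)
    {c : SimplicialChain V} (hc : c ∈ restrictSupport (ZMod 2) P) : T c ∈ N := by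
  have : restrictSupport (ZMod 2) P ≤ N.comap T := by
    rw [restrictSupport_eq_span, Submodule.span_le]
    rintro _ ⟨l, hl, rfl⟩
    exact h l hl
  exact this hc

lemma eq_of_mem_restrictSupport {P : Set (V →₀ ℕ)} (S T : SimplicialChain V →ₗ[ZMod 2] M)
    (h : ∀ l ∈ P, S (monomial l 1) = T (monomial l 1)) {c : SimplicialChain V}
    (hc : c ∈ restrictSupport (ZMod 2) P) : S c = T c := by
  rw [restrictSupport_eq_span] at hc
  exact LinearMap.eqOn_span (by rintro _ ⟨l, hl, rfl⟩; exact h l hl) hc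

lemma X_mul_mem_restrictSupport {P Q : Set (V →₀ ℕ)} {a : V}
    (h : ∀ l ∈ P, Finsupp.single a 1 + l ∈ Q) {c : SimplicialChain V}
    (hc : c ∈ restrictSupport (ZMod 2) P) : X a * c ∈ restrictSupport (ZMod 2) Q :=
  map_mem_of_mem_restrictSupport (LinearMap.mulLeft (ZMod 2) (X a)) (fun l hl => by
    simpa [X, monomial_mul, monomial_mem_restrictSupport] using h l hl) hc

lemma rename_mem_restrictSupport {P : Set (V →₀ ℕ)} {Q : Set (W →₀ ℕ)} {f : V → W}
    (h : ∀ l ∈ P, l.mapDomain f ∈ Q) {c : SimplicialChain V}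
    (hc : c ∈ restrictSupport (ZMod 2) P) : rename f c ∈ restrictSupport (ZMod 2) Q :=
  map_mem_of_mem_restrictSupport (rename f).toLinearMap (fun l hl => by
    simpa [rename_monomial, monomial_mem_restrictSupport] using h l hl) hc

/-- The linear extension to chains of a function on simplices. -/
noncomputable def lift (φ : (V →₀ ℕ) → M) : SimplicialChain V →ₗ[ZMod 2] M :=
  (basisMonomials V (ZMod 2)).constr (ZMod 2) φ

@[simp] lemma lift_monomial (φ : (V →₀ ℕ) → M) (l : V →₀ ℕ) :
    lift φ (monomial l 1) = φ l := by
  rw [← congrFun (coe_basisMonomials V (ZMod 2)) l]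
  exact Module.Basis.constr_basis ..

/-- The boundary operator. It is the derivation sending every vertex to the empty simplex: on a
square-free monomial the Leibniz rule lists the faces of codimension one. -/
noncomputable def bd : Derivation (ZMod 2) (SimplicialChain V) (SimplicialChain V) :=
  mkDerivation (ZMod 2) fun _ => 1

@[simp] lemma bd_X (a : V) : bd (X a : SimplicialChain V) = 1 := by
  simp [bd, mkDerivation_X]

lemma bd_X_mul (a : V) (c : SimplicialChain V) : bd (X a * c) = c + X a * bd c := by
  simp [add_comm]

lemma bd_bd (c : SimplicialChain V) : bd (bd c) = 0 := by
  induction c using MvPolynomial.induction_on with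
  | C a => simp [bd]
  | add c d hc hd => simp [hc, hd]
  | mul_X c a hc => simp [hc, CharTwo.add_self_eq_zero]

lemma bd_rename (f : V → W) (c : SimplicialChain V) : bd (rename f c) = rename f (bd c) := by
  induction c using MvPolynomial.induction_on with
  | C a => simp [bd]
  | add c d hc hd => simp [hc, hd]
  | mul_X c a hc => simp [hc]

lemma bd_mem_restrictSupport {P Q : Set (V →₀ ℕ)}
    (h : ∀ l ∈ P, ∀ l' ≤ l, l'.degree + 1 = l.degree → l' ∈ Q)
    {c : SimplicialChain V} (hc : c ∈ restrictSupport (ZMod 2) P) :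
    bd c ∈ restrictSupport (ZMod 2) Q := by
  refine map_mem_of_mem_restrictSupport bd.toLinearMap (fun l hl => ?_) hc
  simp only [Derivation.coeFn_coe, bd, mkDerivation_monomial, smul_eq_mul, mul_one, one_smul]
  refine Submodule.sum_mem _ fun v hv => (monomial_mem_restrictSupport _).2 (.inl ?_)
  have hv' : Finsupp.single v 1 ≤ l := by
    simpa [Nat.one_le_iff_ne_zero] using hv
  refine h l hl _ tsub_le_self ?_
  conv_rhs => rw [← tsub_add_cancel_of_le hv', map_add, Finsupp.degree_single]

lemma bd_monomial_mem_restrictSupport (l : V →₀ ℕ) : bd (monomial l 1) ∈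
    restrictSupport (ZMod 2) {l' | l' ≤ l ∧ l'.degree + 1 = l.degree} :=
  bd_mem_restrictSupport (P := {l}) (by rintro _ rfl l' h1 h2; exact ⟨h1, h2⟩)
    ((monomial_mem_restrictSupport _).2 (.inl rfl))

/-- Induction over skeleta: the boundary of a simplex has smaller dimension than the simplex. -/
lemma linearMap_ext_of_bd {S T : SimplicialChain V →ₗ[ZMod 2] M} (h1 : S 1 = T 1)
    (hbd : ∀ l : V →₀ ℕ, l ≠ 0 → S (bd (monomial l 1)) = T (bd (monomial l 1)) →
      S (monomial l 1) = T (monomial l 1)) : S = T := by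
  have h : ∀ n : ℕ, ∀ l : V →₀ ℕ, l.degree = n → S (monomial l 1) = T (monomial l 1) := by
    intro n
    induction n with
    | zero =>
      intro l hl
      obtain rfl := (Finsupp.degree_eq_zero_iff l).1 hl
      exact h1
    | succ n ih =>
      intro l hl
      refine hbd l (by rintro rfl; simp at hl) ?_
      exact eq_of_mem_restrictSupport S T
        (fun l' hl' => ih l' (Nat.succ_injective (hl'.2.trans hl)))
        (bd_monomial_mem_restrictSupport l)
  exact LinearMap.ext fun c =>
    eq_of_mem_restrictSupport S T (P := Set.univ) (fun l _ => h l.degree l rfl) (by simp)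

/-! ### Alternating simplices of labels -/

/-- A label is a natural number together with a sign; `opposite` changes the sign. -/
def opposite (x : ℕ × Bool) : ℕ × Bool := (x.1, !x.2)

/-- A simplex of labels is alternating, starting with the sign `s`, if its labels can be ordered so
that the absolute values strictly increase and the signs are `s, -s, s, …`. -/
inductive IsAlternating : Bool → (ℕ × Bool →₀ ℕ) → Prop
  | nil (s : Bool) : IsAlternating s 0
  | cons {s : Bool} {i : ℕ} {m : ℕ × Bool →₀ ℕ} (hi : ∀ x ∈ m.support, i < x.1)
      (hm : IsAlternating (!s) m) : IsAlternating s (Finsupp.single (i, s) 1 + m)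

lemma IsAlternating.mapDomain_opposite {s : Bool} {m : ℕ × Bool →₀ ℕ} (h : IsAlternating s m) :
    IsAlternating (!s) (m.mapDomain opposite) := by
  induction h with
  | nil s => simpa using IsAlternating.nil (!s)
  | @cons s i m hi hm ih =>
    rw [Finsupp.mapDomain_add, Finsupp.mapDomain_single]
    refine .cons (fun x hx => ?_) ih
    obtain ⟨y, hy, rfl⟩ := Finset.mem_image.1 (Finsupp.mapDomain_support hx)
    exact hi y hy

lemma mapDomain_opposite_involutive :
    Function.Involutive (Finsupp.mapDomain (M := ℕ) opposite) := fun m => by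
  rw [← Finsupp.mapDomain_comp]
  convert Finsupp.mapDomain_id using 2
  exact funext fun x => by simp [opposite]

lemma isAlternating_mapDomain_opposite {s : Bool} {m : ℕ × Bool →₀ ℕ} :
    IsAlternating (!s) (m.mapDomain opposite) ↔ IsAlternating s m := by
  refine ⟨fun h => ?_, IsAlternating.mapDomain_opposite⟩
  simpa [mapDomain_opposite_involutive m] using h.mapDomain_opposite

lemma support_single_add (a : V) (m : V →₀ ℕ) [DecidableEq V] :
    (Finsupp.single a 1 + m).support = insert a m.support := by
  ext x
  by_cases h : x = a <;> simp [h, eq_comm]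

lemma IsAlternating.degree_eq_card {s : Bool} {m : ℕ × Bool →₀ ℕ} (h : IsAlternating s m) :
    m.degree = (m.support.image Prod.fst).card := by
  induction h with
  | nil => simp
  | @cons _ i m hi _ ih =>
    have : i ∉ m.support.image Prod.fst := fun h => by
      obtain ⟨x, hx, rfl⟩ := Finset.mem_image.1 h
      exact (hi x hx).false
    rw [support_single_add, Finset.image_insert, Finset.card_insert_of_notMem this, ← ih,
      map_add, Finsupp.degree_single, add_comm]

lemma IsAlternating.degree_le {s : Bool} {m : ℕ × Bool →₀ ℕ} (h : IsAlternating s m) {k : ℕ}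
    (hk : ∀ x ∈ m.support, x.1 < k) : m.degree ≤ k := by
  rw [h.degree_eq_card, ← Finset.card_range k]
  exact Finset.card_le_card (Finset.image_subset_iff.2 fun x hx => Finset.mem_range.2 (hk x hx))

lemma IsAlternating.notMem_support {s : Bool} {a : ℕ × Bool} {m : ℕ × Bool →₀ ℕ}
    (h : ∀ x ∈ m.support, a.1 < x.1 ∨ x = a) (hm : IsAlternating s m) (hs : a.2 ≠ s) :
    a ∉ m.support := by
  cases hm with
  | nil => simp
  | @cons _ i m hi _ =>
    simp only [support_single_add, Finset.mem_insert, forall_eq_or_imp] at h ⊢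
    rintro (rfl | ha)
    · exact hs rfl
    · rcases h.1 with h | rfl
      · exact lt_asymm h (hi a ha)
      · exact hs rfl

lemma isAlternating_single_add {s : Bool} {a : ℕ × Bool} {m : ℕ × Bool →₀ ℕ}
    (h : ∀ x ∈ m.support, a.1 < x.1 ∨ x = a) :
    IsAlternating s (Finsupp.single a 1 + m) ↔ a.2 = s ∧ IsAlternating (!s) m := by
  constructor
  · intro hs
    obtain ⟨i, m', hi, hm', heq⟩ : ∃ i m', (∀ x ∈ m'.support, i < x.1) ∧ IsAlternating (!s) m' ∧
        Finsupp.single a 1 + m = Finsupp.single (i, s) 1 + m' := by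
      generalize hn : Finsupp.single a 1 + m = n at hs
      cases hs with
      | nil => exact absurd (congrArg Finsupp.degree hn) (by simp)
      | cons hi hm => exact ⟨_, _, hi, hm, rfl⟩
    have hsupp := congrArg Finsupp.support heq
    rw [support_single_add, support_single_add] at hsupp
    obtain rfl : a = (i, s) := by
      rcases Finset.mem_insert.1 (hsupp ▸ Finset.mem_insert_self a _) with ha | ha
      · exact ha
      · rcases Finset.mem_insert.1 (hsupp ▸ Finset.mem_insert_self (i, s) _) with his | his
        · exact his.symm
        · exact (h _ his).elim (fun h => absurd (hi a ha) h.not_gt) Eq.symm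
    exact ⟨rfl, add_left_cancel heq ▸ hm'⟩
  · rintro ⟨rfl, hm⟩
    have ha := hm.notMem_support h (by simp)
    exact .cons (fun x hx => (h x hx).resolve_right fun hxa => ha (hxa ▸ hx)) hm

open Classical in
/-- The number, modulo two, of alternating simplices with first sign `s` in a chain of labels. -/
noncomputable def altCount (s : Bool) : SimplicialChain (ℕ × Bool) →ₗ[ZMod 2] ZMod 2 :=
  lift fun m => if IsAlternating s m then 1 else 0

open Classical in
lemma altCount_monomial (s : Bool) (m : ℕ × Bool →₀ ℕ) :
    altCount s (monomial m 1) = if IsAlternating s m then 1 else 0 :=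
  lift_monomial _ _

lemma altCount_rename_opposite (s : Bool) (c : SimplicialChain (ℕ × Bool)) :
    altCount (!s) (rename opposite c) = altCount s c := by
  classical
  refine eq_of_mem_restrictSupport (altCount (!s) ∘ₗ (rename opposite).toLinearMap) (altCount s)
    (P := Set.univ) (fun m _ => ?_) (by simp)
  simp only [LinearMap.comp_apply, AlgHom.toLinearMap_apply, rename_monomial, altCount_monomial]
  exact if_congr isAlternating_mapDomain_opposite rfl rfl

lemma altCount_eq_zero {s : Bool} {k n : ℕ} (hkn : k < n) {c : SimplicialChain (ℕ × Bool)}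
    (hc : c ∈ restrictSupport (ZMod 2) {m | m.degree = n ∧ ∀ x ∈ m.support, x.1 < k}) :
    altCount s c = 0 := by
  refine eq_of_mem_restrictSupport (altCount s) 0 (fun m hm => ?_) hc
  rw [altCount_monomial, if_neg fun h => hkn.not_ge (hm.1 ▸ h.degree_le hm.2), LinearMap.zero_apply]

lemma altCount_X_mul (s : Bool) (a : ℕ × Bool) {c : SimplicialChain (ℕ × Bool)}
    (hc : c ∈ restrictSupport (ZMod 2) {m | ∀ x ∈ m.support, a.1 < x.1 ∨ x = a}) :
    altCount s (X a * c) = if a.2 = s then altCount (!s) c else 0 := by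
  classical
  refine eq_of_mem_restrictSupport (altCount s ∘ₗ LinearMap.mulLeft _ (X a))
    (if a.2 = s then altCount (!s) else 0) (fun m hm => ?_) hc |>.trans (by split_ifs <;> rfl)
  rw [LinearMap.comp_apply, LinearMap.mulLeft_apply, X, monomial_mul, mul_one, altCount_monomial]
  by_cases hs : a.2 = s
  · rw [if_pos hs, altCount_monomial]
    exact if_congr (by rw [isAlternating_single_add hm, and_iff_right hs]) rfl rfl
  · rw [if_neg hs, LinearMap.zero_apply, if_neg fun h => hs ((isAlternating_single_add hm).1 h).1]

/-- No two labels of the simplex are opposite. -/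
def noOpposite : Set (ℕ × Bool →₀ ℕ) :=
  {m | ∀ x ∈ m.support, ∀ y ∈ m.support, x.1 = y.1 → x = y}

lemma exists_eq_single_add_of_mem_noOpposite {m : ℕ × Bool →₀ ℕ} (hm : m ∈ noOpposite)
    (h0 : m ≠ 0) : ∃ a m', m = Finsupp.single a 1 + m' ∧ m' ∈ noOpposite ∧
      ∀ x ∈ m'.support, a.1 < x.1 ∨ x = a := by
  obtain ⟨a, ha, hmin⟩ :=
    Finset.exists_min_image m.support Prod.fst (Finsupp.support_nonempty_iff.2 h0)
  have hle : Finsupp.single a 1 ≤ m := by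
    simpa [Nat.one_le_iff_ne_zero] using ha
  have hsupp : (m - Finsupp.single a 1).support ⊆ m.support := Finsupp.support_mono tsub_le_self
  refine ⟨a, m - Finsupp.single a 1, (add_tsub_cancel_of_le hle).symm,
    fun x hx y hy => hm x (hsupp hx) y (hsupp hy), fun x hx => ?_⟩
  exact (hmin x (hsupp hx)).lt_or_eq.imp_right fun h => (hm a ha x (hsupp hx) h).symm

lemma altCount_bd_monomial (s : Bool) {m : ℕ × Bool →₀ ℕ} (hm : m ∈ noOpposite) :
    altCount s (bd (monomial m 1)) = altCount s (monomial m 1) + altCount (!s) (monomial m 1) := by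
  induction hn : m.degree generalizing s m with
  | zero =>
    obtain rfl := (Finsupp.degree_eq_zero_iff m).1 hn
    rw [altCount_monomial, altCount_monomial, if_pos (.nil _), if_pos (.nil _),
      CharTwo.add_self_eq_zero, monomial_zero', C_1, Derivation.map_one_eq_zero, map_zero]
  | succ n ih =>
    obtain ⟨a, m, rfl, hm', hmin⟩ := exists_eq_single_add_of_mem_noOpposite hm
      (by rintro rfl; simp at hn)
    have hmon : monomial (Finsupp.single a 1 + m) (1 : ZMod 2) = X a * monomial m 1 := by
      rw [X, monomial_mul, one_mul]
    have hmem : monomial m (1 : ZMod 2) ∈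
        restrictSupport (ZMod 2) {m | ∀ x ∈ m.support, a.1 < x.1 ∨ x = a} :=
      (monomial_mem_restrictSupport _).2 (.inl hmin)
    have hbd := bd_mem_restrictSupport (P := {m | ∀ x ∈ m.support, a.1 < x.1 ∨ x = a})
      (Q := {m | ∀ x ∈ m.support, a.1 < x.1 ∨ x = a})
      (fun l hl l' hl' _ x hx => hl x (Finsupp.support_mono hl' hx)) hmem
    have ih' := ih (!s) hm' (by simpa [add_comm 1] using hn)
    rw [hmon, bd_X_mul, map_add, altCount_X_mul s a hbd, altCount_X_mul s a hmem,
      altCount_X_mul (!s) a hmem, ih', Bool.not_not]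
    by_cases hs : a.2 = s
    · simp only [hs, if_true, Bool.eq_not_self, if_false, add_zero]
      rw [add_comm (altCount (!s) _), ← add_assoc, CharTwo.add_self_eq_zero, zero_add]
    · rw [if_neg hs, if_neg hs, if_pos (Bool.eq_not.2 hs), add_zero, zero_add]

lemma altCount_bd (s : Bool) {c : SimplicialChain (ℕ × Bool)}
    (hc : c ∈ restrictSupport (ZMod 2) noOpposite) :
    altCount s (bd c) = altCount s c + altCount (!s) c :=
  eq_of_mem_restrictSupport (altCount s ∘ₗ bd.toLinearMap) (altCount s + altCount (!s))
    (fun _ hm => altCount_bd_monomial s hm) hc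

/-! ### Barycentric subdivision -/

section Subdivision

variable {E F : Type*} [NormedAddCommGroup E] [NormedSpace ℝ E] [AddCommGroup F] [Module ℝ F]

/-- The barycenter of a simplex, vertices being counted with multiplicity. -/
noncomputable def bary (l : F →₀ ℕ) : F := (l.degree : ℝ)⁻¹ • l.sum fun v k => k • v

lemma bary_mapDomain {G : Type*} [AddCommGroup G] [Module ℝ G] (f : F →ₗ[ℝ] G) (l : F →₀ ℕ) :
    bary (l.mapDomain f) = f (bary l) := by
  rw [bary, bary, Finsupp.degree_mapDomain, map_smul, map_finsuppSum,
    Finsupp.sum_mapDomain_index (by simp) (by simp [add_smul])]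
  simp

lemma bary_mem_convexHull {l : F →₀ ℕ} (hl : l ≠ 0) :
    bary l ∈ convexHull ℝ (l.support : Set F) := by
  have hpos : (0 : ℝ) < l.degree := by
    exact_mod_cast Nat.pos_of_ne_zero ((Finsupp.degree_eq_zero_iff l).not.2 hl)
  have h := (convex_convexHull ℝ (l.support : Set F)).sum_mem (t := l.support)
    (w := fun v => (l.degree : ℝ)⁻¹ * l v) (z := id) (fun _ _ => by positivity)
    (by rw [← Finset.mul_sum, ← Nat.cast_sum, ← Finsupp.degree_apply, inv_mul_cancel₀ hpos.ne'])
    fun v hv => subset_convexHull ℝ _ hv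
  simpa only [bary, Finsupp.sum, Finset.smul_sum, mul_smul, Nat.cast_smul_eq_nsmul, id] using h

lemma norm_degree_smul_sub_sum_le {l : E →₀ ℕ} {v : E} {δ : ℝ}
    (h : ∀ w ∈ l.support, dist v w ≤ δ) :
    ‖l.degree • v - l.sum fun w k => k • w‖ ≤ l.degree * δ := by
  rw [Finsupp.degree_apply, Finsupp.sum, Finset.sum_smul, ← Finset.sum_sub_distrib, Nat.cast_sum,
    Finset.sum_mul]
  refine norm_sum_le_of_le _ fun w hw => ?_
  rw [← smul_sub, ← Nat.cast_smul_eq_nsmul ℝ, norm_smul, ← dist_eq_norm, Real.norm_natCast]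
  exact mul_le_mul_of_nonneg_left (h w hw) (Nat.cast_nonneg _)

lemma dist_bary_le {l : E →₀ ℕ} {d : ℕ} {δ : ℝ} (hd : l.degree ≤ d + 1) (hδ : 0 ≤ δ)
    (h : ∀ v ∈ l.support, ∀ w ∈ l.support, dist v w ≤ δ) {v : E} (hv : v ∈ l.support) :
    dist v (bary l) ≤ d / (d + 1) * δ := by
  obtain ⟨m, rfl⟩ := exists_add_of_le (a := Finsupp.single v 1) (b := l)
    (by simpa [Nat.one_le_iff_ne_zero] using hv)
  have hm := norm_degree_smul_sub_sum_le (l := m) fun w hw => h v hv w (by simp_all)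
  have hdeg : (Finsupp.single v 1 + m).degree = m.degree + 1 := by simp [add_comm]
  have hmd : m.degree ≤ d := by omega
  have hsub : v - bary (Finsupp.single v 1 + m) =
      ((m.degree : ℝ) + 1)⁻¹ • (m.degree • v - m.sum fun w k => k • w) := by
    rw [bary, hdeg, Finsupp.sum_add_index' (by simp) (by simp [add_smul]),
      Finsupp.sum_single_index (by simp), eq_inv_smul_iff₀ (by positivity), smul_sub, Nat.cast_succ,
      smul_inv_smul₀ (by positivity), ← Nat.cast_smul_eq_nsmul ℝ]
    module
  rw [dist_eq_norm, hsub, norm_smul, norm_inv, Real.norm_of_nonneg (by positivity),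
    inv_mul_le_iff₀ (by positivity)]
  refine hm.trans ?_
  rw [← mul_assoc]
  refine mul_le_mul_of_nonneg_right ?_ hδ
  rw [← mul_div_assoc, le_div_iff₀ (by positivity)]
  have : (m.degree : ℝ) ≤ d := by exact_mod_cast hmd
  linarith

/-- Barycentric subdivision of simplices with `n` vertices. -/
noncomputable def sdDegree : ℕ → SimplicialChain F →ₗ[ZMod 2] SimplicialChain F
  | 0 => LinearMap.id
  | n + 1 => lift fun l => X (bary l) * sdDegree n (bd (monomial l 1))

/-- Barycentric subdivision: a nonempty simplex is replaced by the cone over its subdivided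
boundary with apex its barycenter. -/
noncomputable def sd : SimplicialChain F →ₗ[ZMod 2] SimplicialChain F :=
  lift fun l => sdDegree l.degree (monomial l 1)

lemma sd_one : sd (1 : SimplicialChain F) = 1 := by
  rw [← C_1, ← monomial_zero', sd, lift_monomial, map_zero, sdDegree, LinearMap.id_apply]

lemma sd_monomial {l : F →₀ ℕ} (hl : l ≠ 0) :
    sd (monomial l 1) = X (bary l) * sd (bd (monomial l 1)) := by
  obtain ⟨n, hn⟩ : ∃ n, l.degree = n + 1 :=
    Nat.exists_eq_succ_of_ne_zero ((Finsupp.degree_eq_zero_iff l).not.2 hl)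
  rw [sd, lift_monomial, hn, sdDegree, lift_monomial]
  congr 1
  refine eq_of_mem_restrictSupport _ _ (fun l' hl' => ?_) (bd_monomial_mem_restrictSupport l)
  rw [lift_monomial, Nat.succ_injective (hl'.2.trans hn)]

lemma bd_sd (c : SimplicialChain F) : bd (sd c) = sd (bd c) := by
  suffices h : bd.toLinearMap ∘ₗ sd = sd (F := F) ∘ₗ bd.toLinearMap from LinearMap.congr_fun h c
  refine linearMap_ext_of_bd (by simp [sd_one]) fun l hl ih => ?_
  simp only [LinearMap.comp_apply, Derivation.coeFn_coe] at ih ⊢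
  rw [sd_monomial hl, bd_X_mul, ih, bd_bd, map_zero, mul_zero, add_zero]

lemma rename_sd {G : Type*} [AddCommGroup G] [Module ℝ G] (f : F →ₗ[ℝ] G) (c : SimplicialChain F) :
    rename f (sd c) = sd (rename f c) := by
  suffices h : (rename f).toLinearMap ∘ₗ sd = sd ∘ₗ (rename f).toLinearMap from
    LinearMap.congr_fun h c
  refine linearMap_ext_of_bd (by simp [sd_one]) fun l hl ih => ?_
  simp only [LinearMap.comp_apply, AlgHom.toLinearMap_apply] at ih ⊢
  have hmap : l.mapDomain f ≠ 0 := by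
    rwa [ne_eq, ← Finsupp.degree_eq_zero_iff, Finsupp.degree_mapDomain, Finsupp.degree_eq_zero_iff]
  rw [sd_monomial hl, map_mul, rename_X, ih, rename_monomial, sd_monomial hmap, bary_mapDomain,
    ← bd_rename, rename_monomial]

/-- Simplices with `n` vertices and mesh at most `δ` whose convex hull is contained in `T`. -/
def fine (T : Set E) (n : ℕ) (δ : ℝ) : Set (E →₀ ℕ) :=
  {l | l.degree = n ∧ convexHull ℝ (l.support : Set E) ⊆ T ∧
    ∀ v ∈ l.support, ∀ w ∈ l.support, dist v w ≤ δ}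

lemma fine_mono {S T : Set E} (h : S ⊆ T) (n : ℕ) (δ : ℝ) : fine S n δ ⊆ fine T n δ :=
  fun _ hl => ⟨hl.1, hl.2.1.trans h, hl.2.2⟩

lemma single_add_mem_fine {T : Set E} (hT : Convex ℝ T) {n : ℕ} {δ : ℝ} (hδ : 0 ≤ δ) {b : E}
    (hb : b ∈ T) (hdist : ∀ v ∈ T, dist v b ≤ δ) {l : E →₀ ℕ} (hl : l ∈ fine T n δ) :
    Finsupp.single b 1 + l ∈ fine T (n + 1) δ := by
  classical
  have hmem : ∀ v ∈ l.support, v ∈ T := fun v hv => hl.2.1 (subset_convexHull ℝ _ hv)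
  refine ⟨by simp [hl.1, add_comm], convexHull_min ?_ hT, ?_⟩
  · simpa only [support_single_add, Finset.coe_insert, Set.insert_subset_iff] using ⟨hb, hmem⟩
  · simp only [support_single_add, Finset.mem_insert, forall_eq_or_imp, dist_self]
    exact ⟨⟨hδ, fun v hv => dist_comm v b ▸ hdist v (hmem v hv)⟩,
      fun v hv => ⟨hdist v (hmem v hv), hl.2.2 v hv⟩⟩

lemma sd_monomial_mem_fine {l : E →₀ ℕ} {d : ℕ} {δ : ℝ} (hd : l.degree ≤ d + 1) (hδ : 0 ≤ δ)
    (h : ∀ v ∈ l.support, ∀ w ∈ l.support, dist v w ≤ δ) :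
    sd (monomial l 1) ∈ restrictSupport (ZMod 2)
      (fine (convexHull ℝ (l.support : Set E)) l.degree (d / (d + 1) * δ)) := by
  induction hn : l.degree generalizing l with
  | zero =>
    obtain rfl := (Finsupp.degree_eq_zero_iff l).1 hn
    rw [monomial_zero', C_1, sd_one]
    exact (monomial_mem_restrictSupport _).2 (.inl (by simp [fine]))
  | succ n ih =>
    have hl0 : l ≠ 0 := by rintro rfl; simp at hn
    rw [sd_monomial hl0]
    refine X_mul_mem_restrictSupport
      (P := fine (convexHull ℝ (l.support : Set E)) n (d / (d + 1) * δ)) (fun l' hl' => ?_) ?_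
    · refine single_add_mem_fine (convex_convexHull ℝ _) (by positivity) (bary_mem_convexHull hl0)
        (fun v hv => ?_) hl'
      exact convexHull_min (t := Metric.closedBall (bary l) _) (fun v hv => dist_bary_le hd hδ h hv)
        (convex_closedBall _ _) hv
    · refine map_mem_of_mem_restrictSupport sd (fun l' hl' => ?_)
        (bd_monomial_mem_restrictSupport l)
      have hsub : l'.support ⊆ l.support := Finsupp.support_mono hl'.1
      have hl'n : l'.degree = n := Nat.succ_injective (hl'.2.trans hn)
      exact restrictSupport_mono _ (fine_mono (convexHull_mono hsub) _ _)
        (ih (by omega) (fun v hv w hw => h v (hsub hv) w (hsub hw)) hl'n)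

lemma sd_mem_fine {T : Set E} {n d : ℕ} {δ : ℝ} (hd : n ≤ d + 1) (hδ : 0 ≤ δ)
    {c : SimplicialChain E} (hc : c ∈ restrictSupport (ZMod 2) (fine T n δ)) :
    sd c ∈ restrictSupport (ZMod 2) (fine T n (d / (d + 1) * δ)) := by
  refine map_mem_of_mem_restrictSupport sd (fun l hl => ?_) hc
  obtain ⟨rfl, hT, h⟩ := hl
  exact restrictSupport_mono _ (fine_mono hT _ _) (sd_monomial_mem_fine hd hδ h)

lemma sd_pow_mem_fine {T : Set E} {n d : ℕ} {δ : ℝ} (hd : n ≤ d + 1) (hδ : 0 ≤ δ) (N : ℕ)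
    {c : SimplicialChain E} (hc : c ∈ restrictSupport (ZMod 2) (fine T n δ)) :
    (sd ^ N) c ∈ restrictSupport (ZMod 2) (fine T n ((d / (d + 1)) ^ N * δ)) := by
  induction N with
  | zero => simpa using hc
  | succ N ih =>
    rw [pow_succ' sd, Module.End.mul_apply, pow_succ' (_ / _), mul_assoc]
    exact sd_mem_fine hd (by positivity) ih

lemma bd_sd_pow (N : ℕ) (c : SimplicialChain F) : bd ((sd ^ N) c) = (sd ^ N) (bd c) := by
  induction N generalizing c with
  | zero => simp
  | succ N ih => simp [pow_succ, Module.End.mul_apply, ih, bd_sd]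

lemma rename_neg_sd_pow (N : ℕ) (c : SimplicialChain F) :
    rename Neg.neg ((sd ^ N) c) = (sd ^ N) (rename Neg.neg c) := by
  induction N generalizing c with
  | zero => simp
  | succ N ih =>
    rw [pow_succ, Module.End.mul_apply, ih, Module.End.mul_apply]
    exact congrArg _ (rename_sd (LinearEquiv.neg ℝ).toLinearMap c)

lemma exists_sd_pow_mem_fine (d : ℕ) {δ₀ δ : ℝ} (hδ₀ : 0 ≤ δ₀) (hδ : 0 < δ) : ∃ N : ℕ, ∀ n ≤ d + 1,
    ∀ (T : Set E) (c : SimplicialChain E), c ∈ restrictSupport (ZMod 2) (fine T n δ₀) →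
      (sd ^ N) c ∈ restrictSupport (ZMod 2) (fine T n δ) := by
  have hlim := (tendsto_pow_atTop_nhds_zero_of_lt_one (r := (d : ℝ) / (d + 1)) (by positivity)
    ((div_lt_one (by positivity)).2 (lt_add_one _))).mul_const δ₀
  rw [zero_mul] at hlim
  obtain ⟨N, hN⟩ := (hlim.eventually_le_const hδ).exists
  refine ⟨N, fun n hn T c hc => restrictSupport_mono _ ?_ (sd_pow_mem_fine hn hδ₀ N hc)⟩
  exact fun l hl => ⟨hl.1, hl.2.1, fun v hv w hw => (hl.2.2 v hv w hw).trans hN⟩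

end Subdivision

/-! ### Fan's lemma -/

section Fan

variable {E : Type*} [AddCommGroup E] {lab : E → ℕ × Bool} {c : SimplicialChain E}

/-- The simplices all of whose vertices are labelled oddly and no two of whose vertices have
opposite labels. -/
def admissible (lab : E → ℕ × Bool) : Set (E →₀ ℕ) :=
  {l | (∀ v ∈ l.support, lab (-v) = opposite (lab v)) ∧
    ∀ v ∈ l.support, ∀ w ∈ l.support, (lab v).1 = (lab w).1 → lab v = lab w}

lemma rename_mem_noOpposite (hc : c ∈ restrictSupport (ZMod 2) (admissible lab)) :
    rename lab c ∈ restrictSupport (ZMod 2) noOpposite := by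
  classical
  refine rename_mem_restrictSupport (fun l hl x hx y hy hxy => ?_) hc
  obtain ⟨v, hv, rfl⟩ := Finset.mem_image.1 (Finsupp.mapDomain_support hx)
  obtain ⟨w, hw, rfl⟩ := Finset.mem_image.1 (Finsupp.mapDomain_support hy)
  exact hl.2 v hv w hw hxy

lemma rename_rename_neg (hc : c ∈ restrictSupport (ZMod 2) (admissible lab)) :
    rename lab (rename Neg.neg c) = rename opposite (rename lab c) := by
  refine eq_of_mem_restrictSupport ((rename lab).toLinearMap ∘ₗ (rename Neg.neg).toLinearMap)
    ((rename opposite).toLinearMap ∘ₗ (rename lab).toLinearMap) (fun l hl => ?_) hc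
  simp only [LinearMap.comp_apply, AlgHom.toLinearMap_apply, rename_monomial,
    ← Finsupp.mapDomain_comp]
  rw [Finsupp.mapDomain_congr fun v hv => by exact hl.1 v hv]
  rfl

lemma altCount_rename_add_rename_neg (s : Bool)
    (hc : c ∈ restrictSupport (ZMod 2) (admissible lab)) :
    altCount s (rename lab (c + rename Neg.neg c)) = altCount s (rename lab (bd c)) := by
  rw [map_add, map_add, rename_rename_neg hc, ← bd_rename, altCount_bd s (rename_mem_noOpposite hc),
    ← altCount_rename_opposite (!s), Bool.not_not]

lemma altCount_rename_bd_add_rename_neg (s : Bool)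
    (hc : c ∈ restrictSupport (ZMod 2) (admissible lab)) :
    altCount s (rename lab (bd (c + rename Neg.neg c))) = 0 := by
  have hno := rename_mem_noOpposite hc
  have hopp := altCount_rename_opposite (!s) (bd (rename lab c))
  rw [Bool.not_not] at hopp
  rw [← bd_rename, map_add, map_add, rename_rename_neg hc, bd_rename opposite, map_add, hopp,
    altCount_bd _ hno, altCount_bd _ hno, Bool.not_not, add_comm (altCount (!s) _),
    CharTwo.add_self_eq_zero]

lemma altCount_rename_bd_add_rename_neg_of_lt (s : Bool) {n : ℕ}
    (hc : c ∈ restrictSupport (ZMod 2)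
      {l | l.degree = n + 2 ∧ ∀ v ∈ l.support, (lab v).1 < n ∧ (lab (-v)).1 < n}) :
    altCount s (rename lab (bd (c + rename Neg.neg c))) = 0 := by
  classical
  set P : Set (E →₀ ℕ) :=
    {l | l.degree = n + 2 ∧ ∀ v ∈ l.support, (lab v).1 < n ∧ (lab (-v)).1 < n}
  have hneg : rename Neg.neg c ∈ restrictSupport (ZMod 2) P := by
    refine rename_mem_restrictSupport (P := P) (Q := P)
      (fun l hl => ⟨(Finsupp.degree_mapDomain ..).trans hl.1, fun x hx => ?_⟩) hc
    obtain ⟨v, hv, rfl⟩ := Finset.mem_image.1 (Finsupp.mapDomain_support hx)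
    simpa [and_comm] using hl.2 v hv
  set Q : Set (E →₀ ℕ) := {l | l.degree = n + 1 ∧ ∀ v ∈ l.support, (lab v).1 < n}
  have hbd : bd (c + rename Neg.neg c) ∈ restrictSupport (ZMod 2) Q :=
    bd_mem_restrictSupport (P := P) (Q := Q)
      (fun l hl l' hle hdeg => ⟨Nat.succ_injective (hdeg.trans hl.1),
        fun v hv => (hl.2 v (Finsupp.support_mono hle hv)).1⟩) (add_mem hc hneg)
  have hQ : ∀ l ∈ Q, l.mapDomain lab ∈
      {m : ℕ × Bool →₀ ℕ | m.degree = n + 1 ∧ ∀ x ∈ m.support, x.1 < n} := fun l hl => by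
    refine ⟨(Finsupp.degree_mapDomain ..).trans hl.1, fun x hx => ?_⟩
    obtain ⟨v, hv, rfl⟩ := Finset.mem_image.1 (Finsupp.mapDomain_support hx)
    exact hl.2 v hv
  exact altCount_eq_zero n.lt_succ_self (rename_mem_restrictSupport hQ hbd)

/-- The fundamental cycle of the boundary of the cross-polytope with vertices
`± p 0, …, ± p (d - 1)`. -/
noncomputable def crossPolytope (p : ℕ → E) (d : ℕ) : SimplicialChain E :=
  ∏ i ∈ Finset.range d, (X (p i) + X (-p i))

lemma rename_neg_crossPolytope (p : ℕ → E) (d : ℕ) :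
    rename Neg.neg (crossPolytope p d) = crossPolytope p d := by
  simp [crossPolytope, map_prod, add_comm]

lemma bd_crossPolytope (p : ℕ → E) (d : ℕ) : bd (crossPolytope p d) = 0 := by
  induction d with
  | zero => simp [crossPolytope]
  | succ d ih =>
    rw [crossPolytope, Finset.prod_range_succ, ← crossPolytope, Derivation.leibniz, ih, map_add,
      bd_X, bd_X, CharTwo.add_self_eq_zero, smul_zero, smul_zero, add_zero]

lemma crossPolytope_succ (p : ℕ → E) (d : ℕ) :
    crossPolytope p (d + 1) =
      X (p d) * crossPolytope p d + rename Neg.neg (X (p d) * crossPolytope p d) := by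
  rw [map_mul, rename_neg_crossPolytope, rename_X, ← add_mul, mul_comm, crossPolytope,
    Finset.prod_range_succ, crossPolytope]

variable [Module ℝ E]

lemma altCount_crossPolytope {p : ℕ → E} {N n : ℕ}
    (h : ∀ d < n, (sd ^ N) (X (p d) * crossPolytope p d) ∈
      restrictSupport (ZMod 2) (admissible lab)) (s : Bool) :
    altCount s (rename lab ((sd ^ N) (crossPolytope p n))) = 1 := by
  induction n with
  | zero =>
    have hN : (sd ^ N) (1 : SimplicialChain E) = 1 := by
      induction N with
      | zero => rfl
      | succ N ih => rw [pow_succ, Module.End.mul_apply, sd_one, ih (by simp)]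
    rw [crossPolytope, Finset.prod_range_zero, hN, map_one, ← C_1, ← monomial_zero',
      altCount_monomial, if_pos (.nil s)]
  | succ n ih =>
    rw [crossPolytope_succ, map_add, ← rename_neg_sd_pow,
      altCount_rename_add_rename_neg s (h n n.lt_succ_self), bd_sd_pow, bd_X_mul,
      bd_crossPolytope, mul_zero, add_zero]
    exact ih fun d hd => h d (by omega)

/-- The two halves `± B` of the subdivided ball have as boundary the subdivided cross-polytope,
which has an odd number of alternating simplices; so some simplex of `B` must violate the
conditions. -/
lemma notMem_admissible_union {p : ℕ → E} {N n : ℕ}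
    (hsphere : ∀ d < n + 1, (sd ^ N) (X (p d) * crossPolytope p d) ∈
      restrictSupport (ZMod 2) (admissible lab)) :
    (sd ^ N) (X 0 * (X (p n) * crossPolytope p n)) ∉ restrictSupport (ZMod 2) (admissible lab ∪
      {l | l.degree = n + 2 ∧ ∀ v ∈ l.support, (lab v).1 < n ∧ (lab (-v)).1 < n}) := by
  intro hball
  set B := (sd ^ N) (X 0 * (X (p n) * crossPolytope p n)) with hB
  have hzero : altCount true (rename lab (bd (B + rename Neg.neg B))) = 0 := by
    have h := eq_of_mem_restrictSupport (altCount true ∘ₗ (rename lab).toLinearMap ∘ₗ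
      bd.toLinearMap ∘ₗ (LinearMap.id + (rename Neg.neg).toLinearMap)) 0 (fun l hl => ?_) hball
    · exact h
    simp only [LinearMap.comp_apply, LinearMap.add_apply, LinearMap.id_apply,
      AlgHom.toLinearMap_apply, Derivation.coeFn_coe, LinearMap.zero_apply]
    rcases hl with hl | hl
    · exact altCount_rename_bd_add_rename_neg true ((monomial_mem_restrictSupport _).2 (.inl hl))
    · exact altCount_rename_bd_add_rename_neg_of_lt true
        ((monomial_mem_restrictSupport _).2 (.inl hl))
  have hbd : bd (B + rename Neg.neg B) = (sd ^ N) (crossPolytope p (n + 1)) := by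
    rw [hB, rename_neg_sd_pow, ← map_add, bd_sd_pow, map_mul (rename Neg.neg), rename_X, neg_zero,
      ← mul_add, ← crossPolytope_succ, bd_X_mul, bd_crossPolytope, mul_zero, add_zero]
  rw [hbd, altCount_crossPolytope hsphere] at hzero
  exact one_ne_zero hzero

end Fan

/-! ### Common zeros of an odd and an even function -/

section Labelling

variable {m n : ℕ} [NeZero m] [NeZero n]

lemma exists_abs_apply_eq_norm (x : Fin n → ℝ) : ∃ i, |x i| = ‖x‖ := by
  obtain ⟨i, -, hi⟩ := Finset.exists_max_image Finset.univ (fun i => |x i|) Finset.univ_nonempty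
  exact ⟨i, le_antisymm (norm_le_pi_norm x i)
    ((pi_norm_le_iff_of_nonneg (abs_nonneg _)).2 fun j => hi j (Finset.mem_univ j))⟩

/-- A coordinate of maximal absolute value. It is chosen as a function of `|x|`, so that it is the
same for `x` and for `-x`. -/
noncomputable def dominantCoord (x : Fin n → ℝ) : Fin n :=
  (exists_abs_apply_eq_norm fun i => |x i|).choose

lemma abs_apply_dominantCoord (x : Fin n → ℝ) : |x (dominantCoord x)| = ‖x‖ := by
  have h := (exists_abs_apply_eq_norm fun i => |x i|).choose_spec
  rw [abs_abs] at h
  exact h.trans (by simp [Pi.norm_def])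

lemma dominantCoord_neg (x : Fin n → ℝ) : dominantCoord (-x) = dominantCoord x := by
  simp only [dominantCoord, Pi.neg_apply, abs_neg]

/-- The label of a vector: a dominant coordinate with its sign. -/
noncomputable def coordLabel (x : Fin n → ℝ) : ℕ × Bool :=
  (dominantCoord x, decide (0 < x (dominantCoord x)))

lemma coordLabel_neg {x : Fin n → ℝ} (hx : x ≠ 0) : coordLabel (-x) = opposite (coordLabel x) := by
  have h : x (dominantCoord x) ≠ 0 := by
    rw [← abs_pos, abs_apply_dominantCoord]
    exact norm_pos_iff.2 hx
  rcases h.lt_or_gt with h | h <;> simp [coordLabel, opposite, dominantCoord_neg, h, h.le]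

lemma coordLabel_eq_of_norm_sub_lt {x y : Fin n → ℝ} (hxy : ‖x - y‖ < ‖x‖)
    (h : (coordLabel x).1 = (coordLabel y).1) : coordLabel x = coordLabel y := by
  have hdom : dominantCoord x = dominantCoord y := Fin.ext h
  refine Prod.ext h ?_
  simp only [coordLabel, ← hdom, decide_eq_decide]
  rw [← abs_apply_dominantCoord x] at hxy
  have hclose := abs_lt.1 ((norm_le_pi_norm (x - y) (dominantCoord x)).trans_lt hxy)
  rw [Pi.sub_apply] at hclose
  rcases le_or_gt (x (dominantCoord x)) 0 with hx | hx
  · rw [abs_of_nonpos hx] at hclose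
    constructor <;> intro <;> linarith
  · rw [abs_of_pos hx] at hclose
    constructor <;> intro <;> linarith

/-- The labelling of Fan's lemma attached to an odd `h` and an even `q`: where `q < η` the labels of
`h` are used, and elsewhere those of the identity, shifted beyond the labels of `h`. -/
noncomputable def splitLabel (h : (Fin m → ℝ) → Fin n → ℝ) (q : (Fin m → ℝ) → ℝ) (η : ℝ)
    (v : Fin m → ℝ) : ℕ × Bool :=
  if q v < η then coordLabel (h v) else (n + (coordLabel v).1, (coordLabel v).2)

variable {h : (Fin m → ℝ) → Fin n → ℝ} {q : (Fin m → ℝ) → ℝ} {η : ℝ}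

lemma splitLabel_fst_lt_iff {v : Fin m → ℝ} : (splitLabel h q η v).1 < n ↔ q v < η := by
  by_cases hv : q v < η <;> simp [splitLabel, hv, coordLabel]

lemma splitLabel_neg (hodd : ∀ x, h (-x) = -h x) (heven : ∀ x, q (-x) = q x) {v : Fin m → ℝ}
    (hv : v ≠ 0) (hhv : q v < η → h v ≠ 0) :
    splitLabel h q η (-v) = opposite (splitLabel h q η v) := by
  simp only [splitLabel, heven, hodd, coordLabel_neg hv]
  split_ifs with hq
  · exact coordLabel_neg (hhv hq)
  · rfl

lemma mem_admissible_splitLabel (hodd : ∀ x, h (-x) = -h x) (heven : ∀ x, q (-x) = q x)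
    {l : (Fin m → ℝ) →₀ ℕ} (hl : ∀ v ∈ l.support, ∀ w ∈ l.support, ‖v - w‖ < ‖v‖)
    (hhl : ∀ v ∈ l.support, ∀ w ∈ l.support, q v < η → ‖h v - h w‖ < ‖h v‖) :
    l ∈ admissible (splitLabel h q η) := by
  refine ⟨fun v hv => splitLabel_neg hodd heven ?_ fun hq => ?_, fun v hv w hw hvw => ?_⟩
  · exact norm_pos_iff.1 ((norm_nonneg _).trans_lt (hl v hv v hv))
  · exact norm_pos_iff.1 ((norm_nonneg _).trans_lt (hhl v hv v hv hq))
  · have hqvw : q v < η ↔ q w < η := by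
      rw [← splitLabel_fst_lt_iff (h := h), hvw, splitLabel_fst_lt_iff]
    by_cases hq : q v < η
    · simp only [splitLabel, if_pos hq, if_pos (hqvw.1 hq)] at hvw ⊢
      exact coordLabel_eq_of_norm_sub_lt (hhl v hv w hw hq) hvw
    · simp only [splitLabel, if_neg hq, if_neg (hqvw.not.1 hq), add_right_inj] at hvw ⊢
      rw [coordLabel_eq_of_norm_sub_lt (hl v hv w hw) hvw]

end Labelling

lemma exists_pos_forall_le_norm_of_abs_lt {α F : Type*} [TopologicalSpace α] [NormedAddCommGroup F]
    {K : Set α} (hK : IsCompact K) {h : α → F} {q : α → ℝ} (hh : ContinuousOn h K)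
    (hq : ContinuousOn q K) (hne : ∀ x ∈ K, h x = 0 → q x ≠ 0) :
    ∃ η > 0, ∀ x ∈ K, |q x| < η → η ≤ ‖h x‖ := by
  obtain ⟨η, hη, hηK⟩ := hK.exists_forall_le' (f := fun x => max ‖h x‖ |q x|) (a := 0)
    (hh.norm.sup hq.abs) fun x hx => by
      by_cases hx0 : h x = 0
      · exact lt_max_of_lt_right (abs_pos.2 (hne x hx hx0))
      · exact lt_max_of_lt_left (norm_pos_iff.2 hx0)
  exact ⟨η, hη, fun x hx hqx => (le_max_iff.1 (hηK x hx)).resolve_right hqx.not_ge⟩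

lemma exists_labelling {m n : ℕ} [NeZero m] [NeZero n] {h : (Fin m → ℝ) → Fin n → ℝ}
    {q : (Fin m → ℝ) → ℝ} (hh : Continuous h) (hq : Continuous q) (hodd : ∀ x, h (-x) = -h x)
    (heven : ∀ x, q (-x) = q x) (hq0 : q 0 < 0) {K : Set (Fin m → ℝ)} (hK : IsCompact K)
    (hne : ∀ x ∈ K, h x = 0 → q x ≠ 0) : ∃ lab : (Fin m → ℝ) → ℕ × Bool, ∃ δ > 0, ∀ k,
      (∀ l ∈ fine K k δ, (∀ v ∈ l.support, 0 ≤ q v) → l ∈ admissible lab) ∧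
      ∀ l ∈ fine K k δ, (∃ v ∈ l.support, q v < 0) →
        ∀ v ∈ l.support, (lab v).1 < n ∧ (lab (-v)).1 < n := by
  obtain ⟨η, hη, hηK⟩ :=
    exists_pos_forall_le_norm_of_abs_lt hK hh.continuousOn hq.continuousOn hne
  obtain ⟨δ₀, hδ₀, hqδ₀⟩ := Metric.eventually_nhds_iff.1 (hq.continuousAt.eventually_lt_const hq0)
  obtain ⟨δ₁, hδ₁, hhδ₁⟩ := Metric.uniformContinuousOn_iff.1
    (hK.uniformContinuousOn_of_continuous hh.continuousOn) η hη
  obtain ⟨δ₂, hδ₂, hqδ₂⟩ := Metric.uniformContinuousOn_iff.1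
    (hK.uniformContinuousOn_of_continuous hq.continuousOn) η hη
  obtain ⟨δ, hδ, hδlt⟩ := exists_between (lt_min hδ₀ (lt_min hδ₁ hδ₂))
  obtain ⟨hδδ₀, hδδ₁, hδδ₂⟩ : δ < δ₀ ∧ δ < δ₁ ∧ δ < δ₂ := by simpa only [lt_min_iff] using hδlt
  refine ⟨splitLabel h q η, δ, hδ, fun k => ⟨fun l hl hql => ?_, ?_⟩⟩
  · have hmem : ∀ v ∈ l.support, v ∈ K := fun v hv => hl.2.1 (subset_convexHull ℝ _ hv)
    refine mem_admissible_splitLabel hodd heven (fun v hv w hw => ?_) fun v hv w hw hqv => ?_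
    · have hv0 : δ₀ ≤ ‖v‖ := not_lt.1 fun hlt =>
        (hql v hv).not_gt (hqδ₀ (by rwa [dist_zero_right]))
      rw [← dist_eq_norm]
      linarith [hl.2.2 v hv w hw]
    · rw [← dist_eq_norm]
      refine (hhδ₁ v (hmem v hv) w (hmem w hw) ((hl.2.2 v hv w hw).trans_lt hδδ₁)).trans_le ?_
      exact hηK v (hmem v hv) (by rwa [abs_of_nonneg (hql v hv)])
  · rintro l hl ⟨w, hw, hqw⟩ v hv
    have hclose := hqδ₂ v (hl.2.1 (subset_convexHull ℝ _ hv)) w (hl.2.1 (subset_convexHull ℝ _ hw))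
      ((hl.2.2 v hv w hw).trans_lt hδδ₂)
    have hqv : q v < η := by linarith [(abs_lt.1 (Real.dist_eq _ _ ▸ hclose)).2]
    exact ⟨splitLabel_fst_lt_iff.2 hqv, splitLabel_fst_lt_iff.2 (by rwa [heven])⟩

section Facets

variable {n d : ℕ} {R : ℝ}

/-- The vertex of the cross-polytope of size `R` on the `d`-th positive half-axis. -/
noncomputable def vertex (n : ℕ) (R : ℝ) (d : ℕ) : Fin n → ℝ :=
  fun i => if (i : ℕ) = d then R else 0

/-- Simplices with `d` vertices in a facet of the cross-polytope of size `R` (given by its signs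
`s`) and in the span of the first `d` axes. -/
def facets (n : ℕ) (R : ℝ) (d : ℕ) : Set ((Fin n → ℝ) →₀ ℕ) :=
  {l | l.degree = d ∧ ∃ s : Fin n → ℝ, (∀ i, |s i| = 1) ∧
    ∀ v ∈ l.support, ‖v‖ ≤ R ∧ ∑ i, s i * v i = R ∧ ∀ i : Fin n, d ≤ i → v i = 0}

lemma single_add_mem_facets (hR : 0 ≤ R) (hd : d < n) {ε : ℝ} (hε : |ε| = 1)
    {l : (Fin n → ℝ) →₀ ℕ} (hl : l ∈ facets n R d) :
    Finsupp.single (ε • vertex n R d) 1 + l ∈ facets n R (d + 1) := by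
  classical
  obtain ⟨hdeg, s, hs, hl⟩ := hl
  have hε2 : ε * ε = 1 := by rw [← abs_mul_abs_self, hε, one_mul]
  have hvertex : ∀ i : Fin n, i ≠ ⟨d, hd⟩ → vertex n R d i = 0 := fun i hi =>
    if_neg fun h => hi (Fin.ext h)
  refine ⟨by simp [hdeg, add_comm], Function.update s ⟨d, hd⟩ ε, fun i => ?_, fun v hv => ?_⟩
  · by_cases h : i = ⟨d, hd⟩
    · simpa [h] using hε
    · simpa [h] using hs i
  rw [support_single_add] at hv
  rcases Finset.mem_insert.1 hv with rfl | hv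
  · refine ⟨(pi_norm_le_iff_of_nonneg hR).2 fun i => ?_, ?_, fun i hi => ?_⟩
    · by_cases h : (i : ℕ) = d <;> simp [vertex, h, hε, abs_of_nonneg hR, hR]
    · rw [Finset.sum_eq_single ⟨d, hd⟩ (fun i _ hi => by simp [hvertex i hi]) (by simp)]
      simp [vertex, ← mul_assoc, hε2]
    · simp [hvertex i (by rintro rfl; exact absurd hi (by simp))]
  · obtain ⟨hnorm, hsum, hzero⟩ := hl v hv
    refine ⟨hnorm, (Finset.sum_congr rfl fun i _ => ?_).trans hsum, fun i hi => hzero i (by omega)⟩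
    by_cases h : i = ⟨d, hd⟩
    · simp [h, hzero ⟨d, hd⟩ le_rfl]
    · simp [h]

lemma X_mul_crossPolytope_mem_facets (hR : 0 ≤ R) (hd : d < n) {ε : ℝ} (hε : |ε| = 1) :
    X (ε • vertex n R d) * crossPolytope (vertex n R) d ∈
      restrictSupport (ZMod 2) (facets n R (d + 1)) := by
  refine X_mul_mem_restrictSupport (P := facets n R d)
    (fun l hl => single_add_mem_facets hR hd hε hl) ?_
  induction d generalizing ε with
  | zero =>
    exact (monomial_mem_restrictSupport _).2 (.inl ⟨rfl, 1, by simp, by simp⟩)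
  | succ d ih =>
    have hpos := X_mul_mem_restrictSupport (Q := facets n R (d + 1)) (fun l hl =>
      single_add_mem_facets hR (by omega) abs_one hl) (ih (by omega) hε)
    have hneg := X_mul_mem_restrictSupport (Q := facets n R (d + 1)) (fun l hl =>
      single_add_mem_facets hR (by omega) (ε := -1) (by simp) hl) (ih (by omega) hε)
    rw [crossPolytope, Finset.prod_range_succ, ← crossPolytope, mul_comm, add_mul]
    simpa only [one_smul, neg_one_smul] using add_mem hpos hneg

lemma facets_subset_fine :
    facets n R d ⊆ fine {x : Fin n → ℝ | ‖x‖ ≤ R ∧ R ≤ ∑ i, |x i|} d (2 * R) := by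
  rintro l ⟨hdeg, s, hs, hl⟩
  refine ⟨hdeg, fun x hx => ?_, fun v hv w hw => ?_⟩
  · have hlin : IsLinearMap ℝ fun x : Fin n → ℝ => ∑ i, s i * x i :=
      ⟨fun x y => by simp [mul_add, Finset.sum_add_distrib],
        fun c x => by simp only [Pi.smul_apply, smul_eq_mul, Finset.mul_sum, mul_left_comm]⟩
    have hsub : convexHull ℝ (l.support : Set (Fin n → ℝ)) ⊆
        Metric.closedBall 0 R ∩ {x | ∑ i, s i * x i = R} :=
      convexHull_min (fun v hv => ⟨by simpa using (hl v hv).1, (hl v hv).2.1⟩)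
        ((convex_closedBall _ _).inter (convex_hyperplane hlin R))
    obtain ⟨hnorm, hsum⟩ := hsub hx
    refine ⟨by simpa using hnorm, le_of_eq_of_le hsum.symm (Finset.sum_le_sum fun i _ => ?_)⟩
    exact (le_abs_self _).trans (by rw [abs_mul, hs, one_mul])
  · rw [dist_eq_norm]
    linarith [norm_sub_le v w, (hl v hv).1, (hl w hw).1]

lemma X_mul_crossPolytope_mem_fine (hR : 0 ≤ R) (hd : d < n) :
    X (vertex n R d) * crossPolytope (vertex n R) d ∈ restrictSupport (ZMod 2)
      (fine {x : Fin n → ℝ | ‖x‖ ≤ R ∧ R ≤ ∑ i, |x i|} (d + 1) (2 * R)) := by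
  have h := X_mul_crossPolytope_mem_facets hR hd abs_one
  rw [one_smul] at h
  exact restrictSupport_mono _ facets_subset_fine h

lemma X_zero_mul_X_mul_crossPolytope_mem_fine (hR : 0 ≤ R) (hd : d < n) :
    X 0 * (X (vertex n R d) * crossPolytope (vertex n R) d) ∈ restrictSupport (ZMod 2)
      (fine (Metric.closedBall (0 : Fin n → ℝ) R) (d + 2) (2 * R)) := by
  refine X_mul_mem_restrictSupport (P := fine (Metric.closedBall 0 R) (d + 1) (2 * R))
    (fun l hl => single_add_mem_fine (convex_closedBall _ _) (by positivity)
      (Metric.mem_closedBall_self hR) (fun v hv => ?_) hl) ?_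
  · linarith [Metric.mem_closedBall.1 hv]
  · refine restrictSupport_mono _ (fine_mono (fun x hx => ?_) _ _)
      (X_mul_crossPolytope_mem_fine hR hd)
    exact mem_closedBall_zero_iff.2 hx.1

end Facets

end SimplicialChain

open MvPolynomial SimplicialChain in
lemma exists_eq_zero_of_odd_of_even {n : ℕ} {h : (Fin (n + 1) → ℝ) → Fin n → ℝ}
    {q : (Fin (n + 1) → ℝ) → ℝ} (hh : Continuous h) (hq : Continuous q)
    (hodd : ∀ x, h (-x) = -h x) (heven : ∀ x, q (-x) = q x) (hq0 : q 0 < 0) {R : ℝ} (hR : 0 ≤ R)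
    (hqR : ∀ x, R ≤ ∑ i, |x i| → 0 ≤ q x) : ∃ x, h x = 0 ∧ q x = 0 := by
  rcases eq_or_ne n 0 with rfl | hn
  · obtain ⟨x, hx⟩ := mem_range_of_exists_le_of_exists_ge hq ⟨0, hq0.le⟩
      ⟨fun _ => R, hqR _ (by simp [le_abs_self])⟩
    exact ⟨x, Subsingleton.elim _ _, hx⟩
  have : NeZero n := ⟨hn⟩
  by_contra! hne
  obtain ⟨lab, δ, hδ, hlab⟩ := exists_labelling hh hq hodd heven hq0
    (isCompact_closedBall 0 R) fun x _ => hne x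
  obtain ⟨N, hN⟩ := exists_sd_pow_mem_fine (E := Fin (n + 1) → ℝ) (n + 1)
    (mul_nonneg two_pos.le hR) hδ
  refine notMem_admissible_union (lab := lab) (p := vertex (n + 1) R) (N := N) (n := n)
    (fun d hd => ?_) ?_
  · refine restrictSupport_mono _ (fun l hl => ?_)
      (hN (d + 1) (by omega) _ _ (X_mul_crossPolytope_mem_fine hR hd))
    refine (hlab (d + 1)).1 l (fine_mono (fun x hx => mem_closedBall_zero_iff.2 hx.1) _ _ hl)
      fun v hv => hqR v (hl.2.1 (subset_convexHull ℝ _ hv)).2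
  · refine restrictSupport_mono _ (fun l hl => ?_)
      (hN (n + 2) le_rfl _ _ (X_zero_mul_X_mul_crossPolytope_mem_fine hR n.lt_succ_self))
    by_cases hl0 : ∀ v ∈ l.support, 0 ≤ q v
    · exact .inl ((hlab (n + 2)).1 l hl hl0)
    · push Not at hl0
      exact .inr ⟨hl.1, (hlab (n + 2)).2 l hl hl0⟩

/-! ### Odd maps and subspaces of finite codimension -/

section Intersection

variable {X Y F : Type*} [NormedAddCommGroup X] [NormedSpace ℝ X]
  [NormedAddCommGroup Y] [NormedSpace ℝ Y] {ρ : ℝ}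
  [AddCommGroup F] [Module ℝ F] [TopologicalSpace F] [IsTopologicalAddGroup F]
  [ContinuousSMul ℝ F] [T2Space F]

lemma exists_eq_zero_of_odd_of_even_of_finrank_lt [FiniteDimensional ℝ F]
    (hrank : Module.finrank ℝ F < Module.finrank ℝ Y) {h : Y → F} {q : Y → ℝ}
    (hh : Continuous h) (hq : Continuous q) (hodd : ∀ y, h (-y) = -h y)
    (heven : ∀ y, q (-y) = q y) (hq0 : q 0 < 0) (hρ : 0 ≤ ρ) (hqρ : ∀ y, ρ ≤ ‖y‖ → 0 ≤ q y) :
    ∃ y, h y = 0 ∧ q y = 0 := by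
  obtain ⟨n, hn⟩ := Nat.exists_eq_succ_of_ne_zero hrank.ne_bot
  have : FiniteDimensional ℝ Y := .of_finrank_pos (hn ▸ n.succ_pos)
  obtain ⟨J, hJ⟩ := (finrank_le_iff_exists_linearMap (R := ℝ) (M := F) (M' := Fin n → ℝ)).1
    (by rw [Module.finrank_fin_fun]; omega)
  let T : (Fin (n + 1) → ℝ) ≃L[ℝ] Y := .ofFinrankEq (by rw [hn, Module.finrank_fin_fun])
  obtain ⟨C, hC, hCT⟩ := (T.symm : Y →L[ℝ] (Fin (n + 1) → ℝ)).bound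
  have hfar : ∀ x, (n + 1 : ℕ) * (C * ρ) ≤ ∑ i, |x i| → ρ ≤ ‖T x‖ := by
    intro x hx
    have hsum : ∑ i, |x i| ≤ (n + 1 : ℕ) * ‖x‖ := by
      simpa using Finset.sum_le_card_nsmul Finset.univ (fun i => |x i|) ‖x‖
        fun i _ => norm_le_pi_norm x i
    have hx' : C * ρ ≤ ‖x‖ := le_of_mul_le_mul_left (hx.trans hsum) (by positivity)
    have hxT : ‖x‖ ≤ C * ‖T x‖ := by simpa using hCT (T x)
    exact le_of_mul_le_mul_left (hx'.trans hxT) hC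
  obtain ⟨x, hx, hx'⟩ := exists_eq_zero_of_odd_of_even
    (J.continuous_of_finiteDimensional.comp (hh.comp T.continuous)) (hq.comp T.continuous)
    (fun x => by simp only [Function.comp_apply, map_neg, hodd])
    (fun x => by simp only [Function.comp_apply, map_neg, heven]) (by simpa using hq0)
    (by positivity) fun x hx => hqρ _ (hfar x hx)
  exact ⟨T x, hJ (hx.trans (map_zero J).symm), hx'⟩

/-- The radial retraction of a normed space onto a closed ball around the origin: it fixes the
ball and pushes every other point along its ray to the sphere. -/
noncomputable def radialRetraction (hρ : 0 < ρ) (y : Y) : Metric.closedBall (0 : Y) ρ :=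
  ⟨(ρ / max ρ ‖y‖) • y, by
    have hmax : 0 < max ρ ‖y‖ := lt_max_of_lt_left hρ
    rw [mem_closedBall_zero_iff, norm_smul, Real.norm_of_nonneg (by positivity),
      div_mul_eq_mul_div, div_le_iff₀ hmax]
    gcongr
    exact le_max_right _ _⟩

lemma continuous_radialRetraction (hρ : 0 < ρ) : Continuous (radialRetraction (Y := Y) hρ) :=
  ((continuous_const.div (by fun_prop) fun _ => (lt_max_of_lt_left hρ).ne').smul
    continuous_id).subtype_mk _

lemma radialRetraction_neg (hρ : 0 < ρ) (y : Y) :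
    radialRetraction hρ (-y) = -radialRetraction hρ y := by
  ext; simp [radialRetraction]

lemma norm_radialRetraction (hρ : 0 < ρ) {y : Y} (hy : ρ ≤ ‖y‖) :
    ‖(radialRetraction hρ y : Y)‖ = ρ := by
  have : 0 < ‖y‖ := hρ.trans_le hy
  simp only [radialRetraction, max_eq_right hy]
  rw [norm_smul, Real.norm_of_nonneg (by positivity)]
  field_simp

lemma exists_mem_norm_eq_of_odd {Z : Submodule ℝ X} (hZ : IsClosed (Z : Set X))
    [FiniteDimensional ℝ (X ⧸ Z)] (hrank : Module.finrank ℝ (X ⧸ Z) < Module.finrank ℝ Y)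
    {r : ℝ} (hr : 0 < r) (hρ : 0 < ρ) (γ : C(Metric.closedBall (0 : Y) ρ, X))
    (hodd : ∀ u, γ (-u) = -γ u)
    (hbdry : ∀ u : Metric.closedBall (0 : Y) ρ, ‖(u : Y)‖ = ρ → r ≤ ‖γ u‖) :
    ∃ u, γ u ∈ Z ∧ ‖γ u‖ = r := by
  have : IsClosed (Z : Set X) := hZ
  set g : Y → X := fun y => γ (radialRetraction hρ y) with hg
  have hgc : Continuous g := γ.continuous.comp (continuous_radialRetraction hρ)
  have hgodd : ∀ y, g (-y) = -g y := fun y => by rw [hg]; simp only [radialRetraction_neg, hodd]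
  have : IsAddTorsionFree X := .of_isTorsionFree ℝ X
  have hg0 : g 0 = 0 := self_eq_neg.1 (by rw [← hgodd, neg_zero])
  obtain ⟨y, hyZ, hyr⟩ := exists_eq_zero_of_odd_of_even_of_finrank_lt hrank
    (h := fun y => Z.mkQ (g y)) (q := fun y => ‖g y‖ - r)
    (Z.isOpenQuotientMap_mkQ.continuous.comp hgc) (by fun_prop)
    (fun y => by rw [hgodd, map_neg]) (fun y => by rw [hgodd, norm_neg]) (by simpa [hg0]) hρ.le
    fun y hy => sub_nonneg.2 (hbdry _ (norm_radialRetraction hρ hy))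
  exact ⟨_, (Submodule.Quotient.mk_eq_zero Z).1 hyZ, sub_eq_zero.1 hyr⟩

end Intersection

/-! ### Ekeland's variational principle -/

section Ekeland

variable {α : Type*} [MetricSpace α] {Φ : α → ℝ} {ε : ℝ} {x y z : α}

/-- The points below `x` in Ekeland's partial order: those at which `Φ` is smaller than `Φ x` by at
least `ε` times their distance to `x`. -/
def ekelandSet (Φ : α → ℝ) (ε : ℝ) (x : α) : Set α :=
  {y | Φ y + ε * dist x y ≤ Φ x}

lemma self_mem_ekelandSet : x ∈ ekelandSet Φ ε x := by
  simp [ekelandSet]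

lemma ekelandSet_subset (hε : 0 < ε) (hy : y ∈ ekelandSet Φ ε x) :
    ekelandSet Φ ε y ⊆ ekelandSet Φ ε x := by
  intro z hz
  have hxz := mul_le_mul_of_nonneg_left (dist_triangle x y z) hε.le
  simp only [ekelandSet, Set.mem_ofPred_eq] at *
  linarith

lemma isClosed_ekelandSet (hΦ : LowerSemicontinuous Φ) : IsClosed (ekelandSet Φ ε x) :=
  (hΦ.add (by fun_prop : Continuous fun y => ε * dist x y).lowerSemicontinuous).isClosed_preimage _

lemma exists_mem_ekelandSet_subset_closedBall (hbdd : BddBelow (Set.range Φ)) (hε : 0 < ε)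
    (x : α) {δ : ℝ} (hδ : 0 < δ) :
    ∃ y ∈ ekelandSet Φ ε x, ekelandSet Φ ε y ⊆ Metric.closedBall y δ := by
  have hb : BddBelow (Φ '' ekelandSet Φ ε x) := hbdd.mono (Set.image_subset_range _ _)
  obtain ⟨_, ⟨y, hy, rfl⟩, hlt⟩ := exists_lt_of_csInf_lt (s := Φ '' ekelandSet Φ ε x)
    (Set.image_nonempty.2 ⟨x, self_mem_ekelandSet⟩) (lt_add_of_pos_right _ (mul_pos hε hδ))
  refine ⟨y, hy, fun z hz => Metric.mem_closedBall'.2 ?_⟩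
  have hinf := csInf_le hb ⟨z, ekelandSet_subset hε hy hz, rfl⟩
  have hz' : Φ z + ε * dist y z ≤ Φ y := hz
  exact le_of_mul_le_mul_left (by linarith) hε

lemma exists_mem_ekelandSet_eq_singleton [CompleteSpace α] (hΦ : LowerSemicontinuous Φ)
    (hbdd : BddBelow (Set.range Φ)) (hε : 0 < ε) (x₀ : α) :
    ∃ z ∈ ekelandSet Φ ε x₀, ekelandSet Φ ε z = {z} := by
  let δ : ℕ → ℝ := fun n => 1 / (n + 1)
  have hδ : ∀ n, 0 < δ n := fun n => by positivity
  choose f hfmem hfball using fun n x => exists_mem_ekelandSet_subset_closedBall hbdd hε x (hδ n)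
  let x : ℕ → α := fun n => Nat.rec x₀ f n
  let s : ℕ → Set α := fun n => ekelandSet Φ ε (x (n + 1))
  have hs : Antitone s := antitone_nat_of_succ_le fun n => ekelandSet_subset hε (hfmem _ _)
  have hball : ∀ n, s n ⊆ Metric.closedBall (x (n + 1)) (δ n) := fun n => hfball _ _
  have hsb : ∀ n, Bornology.IsBounded (s n) := fun n => Metric.isBounded_closedBall.subset (hball n)
  have hdiam : Tendsto (fun n => Metric.diam (s n)) atTop (𝓝 0) := by
    refine squeeze_zero (fun _ => Metric.diam_nonneg) (g := fun n => 2 * δ n) (fun n => ?_)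
      (by simpa [δ] using (tendsto_one_div_add_atTop_nhds_zero_nat (𝕜 := ℝ)).const_mul 2)
    exact (Metric.diam_mono (hball n) Metric.isBounded_closedBall).trans
      (Metric.diam_closedBall (hδ n).le)
  obtain ⟨z, hz⟩ := Metric.nonempty_iInter_of_nonempty_biInter
    (fun n => isClosed_ekelandSet hΦ) hsb
    (fun N => ⟨x (N + 1), Set.mem_iInter₂.2 fun n hn => hs hn self_mem_ekelandSet⟩) hdiam
  rw [Set.mem_iInter] at hz
  refine ⟨z, ekelandSet_subset hε (hfmem 0 x₀) (hz 0), Set.eq_singleton_iff_unique_mem.2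
    ⟨self_mem_ekelandSet, fun y hy => dist_le_zero.1 ?_⟩⟩
  exact ge_of_tendsto' hdiam fun n => Metric.dist_le_diam_of_mem (hsb n)
    (ekelandSet_subset hε (hz n) hy) (hz n)

lemma exists_ekeland_point [CompleteSpace α] (hΦ : LowerSemicontinuous Φ)
    (hbdd : BddBelow (Set.range Φ)) (hε : 0 < ε) (x₀ : α) :
    ∃ z, Φ z ≤ Φ x₀ ∧ ∀ y, Φ z - ε * dist z y ≤ Φ y := by
  obtain ⟨z, hz, hsing⟩ := exists_mem_ekelandSet_eq_singleton hΦ hbdd hε x₀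
  refine ⟨z, ?_, fun y => ?_⟩
  · exact (le_add_of_nonneg_right (by positivity)).trans hz
  · by_contra! hy
    have hyz : y = z := Set.eq_of_mem_singleton (hsing ▸ by
      simp only [ekelandSet, Set.mem_ofPred_eq]; linarith)
    simp [hyz] at hy

end Ekeland

/-! ### Symmetric min-max -/

section Descent

variable {𝕜 E F X K : Type*} [NontriviallyNormedField 𝕜] [NormedAddCommGroup E] [NormedSpace 𝕜 E]
  [NormedAddCommGroup F] [NormedSpace 𝕜 F] [NormedAddCommGroup X] [NormedSpace ℝ X]
  [TopologicalSpace K]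

lemma hasFDerivAt_neg_eq_neg_of_even {f : E → F} {f' : E → E →L[𝕜] F}
    (hf : ∀ x, HasFDerivAt f (f' x) x) (heven : ∀ x, f (-x) = f x) (x : E) : f' (-x) = -f' x := by
  have h : HasFDerivAt f (-f' (-x)) x := by
    simpa [Function.comp_def, heven] using (hf (-x)).comp x (hasFDerivAt_id x).neg
  rw [(hf x).unique h, neg_neg]

lemma exists_norm_le_one_apply_lt {ℓ : X →L[ℝ] ℝ} {ε : ℝ} (hℓ : ε < ‖ℓ‖) :
    ∃ x, ‖x‖ ≤ 1 ∧ ℓ x < -ε := by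
  obtain ⟨x, hx, hεx⟩ := ℓ.exists_lt_apply_of_lt_opNorm hℓ
  rcases lt_abs.1 (Real.norm_eq_abs _ ▸ hεx) with h | h
  · exact ⟨-x, by simpa using hx.le, by simpa using h⟩
  · exact ⟨x, hx.le, by linarith⟩

lemma exists_continuousMap_apply_lt [NormalSpace K] [ParacompactSpace K] {T : K → X →L[ℝ] ℝ}
    (hT : Continuous T) {A S : Set K} (hA : IsClosed A) (hS : IsClosed S) (hAS : Disjoint A S)
    {ε : ℝ} (hε : ∀ u ∈ A, ε < ‖T u‖) :
    ∃ w : C(K, X), (∀ u, ‖w u‖ ≤ 1) ∧ (∀ u ∈ S, w u = 0) ∧ ∀ u ∈ A, T u (w u) < -ε := by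
  let t : K → Set X := fun u => {x | ‖x‖ ≤ 1 ∧ (u ∈ S → x = 0) ∧ (u ∈ A → T u x < -ε)}
  have hconv : ∀ u, Convex ℝ (t u) := by
    rintro u x ⟨hx1, hxS, hxA⟩ y ⟨hy1, hyS, hyA⟩ a b ha hb hab
    refine ⟨?_, fun hu => by simp [hxS hu, hyS hu], fun hu => ?_⟩
    · simpa using convex_closedBall (0 : X) 1 (mem_closedBall_zero_iff.2 hx1)
        (mem_closedBall_zero_iff.2 hy1) ha hb hab
    · exact convex_halfSpace_lt (T u).toLinearMap.isLinear (-ε) (hxA hu) (hyA hu) ha hb hab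
  have hlocal : ∀ u, ∃ x, ∀ᶠ v in 𝓝 u, x ∈ t v := by
    intro u
    by_cases hu : u ∈ A
    · obtain ⟨x, hx1, hx⟩ := exists_norm_le_one_apply_lt (hε u hu)
      have hTx : Continuous fun v => T v x := by fun_prop
      refine ⟨x, ?_⟩
      filter_upwards [hTx.continuousAt.eventually_lt_const hx,
        hS.isOpen_compl.mem_nhds (hAS.notMem_of_mem_left hu)] with v hv hvS
      exact ⟨hx1, fun h => absurd h hvS, fun _ => hv⟩
    · refine ⟨0, ?_⟩
      filter_upwards [hA.isOpen_compl.mem_nhds hu] with v hv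
      exact ⟨by simp, fun _ => rfl, fun h => absurd h hv⟩
  obtain ⟨w, hw⟩ := exists_continuous_forall_mem_convex_of_local_const hconv hlocal
  exact ⟨w, fun u => (hw u).1, fun u => (hw u).2.1, fun u => (hw u).2.2⟩

lemma exists_odd_continuousMap_apply_lt [NormalSpace K] [ParacompactSpace K] [InvolutiveNeg K]
    [ContinuousNeg K] {T : K → X →L[ℝ] ℝ} (hT : Continuous T) (hTodd : ∀ u, T (-u) = -T u)
    {A S : Set K} (hA : IsClosed A) (hS : IsClosed S) (hAS : Disjoint A S)
    (hAneg : ∀ u ∈ A, -u ∈ A) (hSneg : ∀ u ∈ S, -u ∈ S) {ε : ℝ} (hε : ∀ u ∈ A, ε < ‖T u‖) :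
    ∃ w : C(K, X), (∀ u, w (-u) = -w u) ∧ (∀ u, ‖w u‖ ≤ 1) ∧ (∀ u ∈ S, w u = 0) ∧
      ∀ u ∈ A, T u (w u) < -ε := by
  obtain ⟨w, hw1, hwS, hwA⟩ := exists_continuousMap_apply_lt hT hA hS hAS hε
  refine ⟨⟨fun u => (1 / 2 : ℝ) • (w u - w (-u)), by fun_prop⟩, fun u => ?_, fun u => ?_,
    fun u hu => ?_, fun u hu => ?_⟩ <;> simp only [ContinuousMap.coe_mk]
  · rw [neg_neg, ← smul_neg, neg_sub]
  · rw [norm_smul, Real.norm_of_nonneg one_half_pos.le]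
    linarith [norm_sub_le (w u) (w (-u)), hw1 u, hw1 (-u)]
  · rw [hwS u hu, hwS _ (hSneg u hu), sub_zero, smul_zero]
  · have hneg := hwA _ (hAneg u hu)
    rw [hTodd, neg_apply] at hneg
    rw [map_smul, map_sub, smul_eq_mul]
    linarith [hwA u hu]

variable {L : X → ℝ} {dL : X → X →L[ℝ] ℝ}

lemma exists_mem_Ioo_sub_eq_mul_apply (hderiv : ∀ x, HasFDerivAt L (dL x) x) (x v : X) {t : ℝ}
    (ht : 0 < t) : ∃ c ∈ Set.Ioo 0 t, L (x + t • v) - L x = t * dL (x + c • v) v := by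
  have hline : ∀ s : ℝ, HasDerivAt (fun s => L (x + s • v)) (dL (x + s • v) v) s := fun s =>
    (hderiv _).comp_hasDerivAt s (by simpa using ((hasDerivAt_id s).smul_const v).const_add x)
  obtain ⟨c, hc, hslope⟩ := exists_hasDerivAt_eq_slope _ _ ht
    (fun s _ => (hline s).continuousAt.continuousWithinAt) fun s _ => hline s
  exact ⟨c, hc, by rw [hslope, sub_zero, mul_div_cancel₀ _ ht.ne', zero_smul, add_zero]⟩

-- Danskin's argument: the mean value theorem on the segments `γ u + [0, t] • w u` gives slopes
-- `≥ -ε`, and compactness of `K` passes to the limit `t → 0`.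
lemma exists_eq_and_neg_le_apply [SeqCompactSpace K] {γ w : C(K, X)}
    (hderiv : ∀ x, HasFDerivAt L (dL x) x) (hcont : Continuous dL) {M ε : ℝ}
    (hM : ∀ u, L (γ u) ≤ M) (hslope : ∀ t : ℝ, 0 < t → ∃ u, M - ε * t ≤ L (γ u + t • w u)) :
    ∃ v, L (γ v) = M ∧ -ε ≤ dL (γ v) (w v) := by
  have hL : Continuous L := continuous_iff_continuousAt.2 fun x => (hderiv x).continuousAt
  let t : ℕ → ℝ := fun n => 1 / ((n : ℝ) + 1)
  have ht : ∀ n, 0 < t n := fun n => by positivity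
  choose u hu using fun n => hslope (t n) (ht n)
  choose c hc hmvt using fun n => exists_mem_Ioo_sub_eq_mul_apply hderiv (γ (u n)) (w (u n)) (ht n)
  have hdL : ∀ n, -ε ≤ dL (γ (u n) + c n • w (u n)) (w (u n)) := fun n =>
    le_of_mul_le_mul_left (by linarith [hu n, hM (u n), hmvt n]) (ht n)
  obtain ⟨v, φ, hφ, hv⟩ := SeqCompactSpace.tendsto_subseq u
  have htφ : Tendsto (t ∘ φ) atTop (𝓝 0) :=
    tendsto_one_div_add_atTop_nhds_zero_nat.comp hφ.tendsto_atTop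
  have hcφ : Tendsto (c ∘ φ) atTop (𝓝 0) :=
    squeeze_zero (fun n => (hc _).1.le) (fun n => (hc _).2.le) htφ
  have hLc : Continuous fun p : K × ℝ => L (γ p.1 + p.2 • w p.1) := by fun_prop
  have hdLc : Continuous fun p : K × ℝ => dL (γ p.1 + p.2 • w p.1) (w p.1) := by fun_prop
  have hLv := (hLc.tendsto (v, 0)).comp (hv.prodMk_nhds htφ)
  have hdLv := (hdLc.tendsto (v, 0)).comp (hv.prodMk_nhds hcφ)
  simp only [zero_smul, add_zero] at hLv hdLv
  exact ⟨v, le_antisymm (hM v) (le_of_tendsto_of_tendsto'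
    (by simpa using (htφ.const_mul ε).const_sub M) hLv fun n => hu (φ n)),
    ge_of_tendsto' hdLv fun n => hdL (φ n)⟩

end Descent

section ContinuousMap

variable {X K : Type*} [TopologicalSpace X] [TopologicalSpace K]

/-- The odd maps with the same values as `γ` on `S`: the class of competitors in the symmetric
min-max principle. -/
def oddMapsEqOn [Neg K] [Neg X] (γ : C(K, X)) (S : Set K) : Set C(K, X) :=
  {η | (∀ u, η (-u) = -η u) ∧ Set.EqOn η γ S}

lemma isClosed_oddMapsEqOn [Neg K] [Neg X] [T2Space X] [ContinuousNeg X] {γ : C(K, X)} {S : Set K} :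
    IsClosed (oddMapsEqOn γ S) := by
  simp only [oddMapsEqOn, Set.EqOn, Set.ofPred_and, Set.ofPred_forall]
  refine (isClosed_iInter fun u => ?_).inter (isClosed_iInter fun u => isClosed_iInter fun _ => ?_)
  all_goals exact isClosed_eq (by fun_prop) (by fun_prop)

variable [CompactSpace K] {L : X → ℝ}

lemma lowerSemicontinuous_iSup_comp (hL : Continuous L) :
    LowerSemicontinuous fun η : C(K, X) => ⨆ u, L (η u) :=
  lowerSemicontinuous_ciSup (fun _ => (isCompact_range (by fun_prop)).bddAbove) fun _ =>
    Continuous.lowerSemicontinuous (by fun_prop)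

lemma le_iSup_comp (hL : Continuous L) (η : C(K, X)) (u : K) : L (η u) ≤ ⨆ v, L (η v) :=
  le_ciSup (isCompact_range (by fun_prop : Continuous fun v => L (η v))).bddAbove u

lemma exists_eq_iSup_comp [Nonempty K] (hL : Continuous L) (η : C(K, X)) :
    ∃ u, L (η u) = ⨆ v, L (η v) := by
  obtain ⟨u, -, hu⟩ := isCompact_univ.exists_isMaxOn (Set.univ_nonempty (α := K))
    (f := fun v => L (η v)) (by fun_prop)
  exact ⟨u, le_antisymm (le_iSup_comp hL η u) (ciSup_le fun v => hu (Set.mem_univ v))⟩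

end ContinuousMap

section MinMax

variable {X K : Type*} [NormedAddCommGroup X] [NormedSpace ℝ X] {L : X → ℝ}
  {dL : X → X →L[ℝ] ℝ}

lemma PalaisSmale.exists_critical_of_forall_norm_le (hPS : PalaisSmale L dL) (hL : Continuous L)
    (hcont : Continuous dL) {β C : ℝ}
    (h : ∀ ε > 0, ∃ x, L x ∈ Set.Icc β C ∧ ‖dL x‖ ≤ ε) : ∃ x, dL x = 0 ∧ β ≤ L x := by
  choose x hLx hx using fun n : ℕ => h (1 / ((n : ℝ) + 1)) (by positivity)
  have hx0 : Tendsto (fun n => ‖dL (x n)‖) atTop (𝓝 0) :=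
    squeeze_zero (fun _ => norm_nonneg _) hx tendsto_one_div_add_atTop_nhds_zero_nat
  obtain ⟨y, φ, hφ, hy⟩ := hPS x
    ⟨max |β| |C|, fun n => abs_le_max_abs_abs (hLx n).1 (hLx n).2⟩ hx0
  refine ⟨y, norm_eq_zero.1 ?_, ge_of_tendsto' ((hL.tendsto y).comp hy) fun n => (hLx (φ n)).1⟩
  exact tendsto_nhds_unique ((hcont.norm.tendsto y).comp hy) (hx0.comp hφ.tendsto_atTop)

variable [TopologicalSpace K] [CompactSpace K] [T2Space K] [SeqCompactSpace K] [InvolutiveNeg K]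
  [ContinuousNeg K] {S : Set K} {γ η : C(K, X)} {ε : ℝ}

lemma exists_norm_le_of_forall_iSup_le [Nonempty K] (hderiv : ∀ x, HasFDerivAt L (dL x) x)
    (hcont : Continuous dL) (heven : ∀ x, L (-x) = L x) (hS : IsClosed S)
    (hSneg : ∀ u ∈ S, -u ∈ S) (hη : η ∈ oddMapsEqOn γ S)
    (hγS : ∀ u ∈ S, L (γ u) < ⨆ v, L (η v)) (hε : 0 ≤ ε)
    (hmin : ∀ ζ ∈ oddMapsEqOn γ S, (⨆ u, L (η u)) - ε * dist η ζ ≤ ⨆ u, L (ζ u)) :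
    ∃ u, L (η u) = ⨆ v, L (η v) ∧ ‖dL (η u)‖ ≤ ε := by
  by_contra! hlarge
  have hL : Continuous L := continuous_iff_continuousAt.2 fun x => (hderiv x).continuousAt
  obtain ⟨hηodd, hηγ⟩ := hη
  have hdisj : Disjoint {u | L (η u) = ⨆ v, L (η v)} S :=
    Set.disjoint_right.2 fun u hu h => (hγS u hu).ne (hηγ hu ▸ h)
  obtain ⟨w, hwodd, hw1, hwS, hw⟩ := exists_odd_continuousMap_apply_lt
    (hcont.comp η.continuous)
    (fun u => by
      simp only [Function.comp_apply, hηodd, hasFDerivAt_neg_eq_neg_of_even hderiv heven])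
    (isClosed_eq (by fun_prop) continuous_const) hS hdisj
    (fun u hu => by simpa only [Set.mem_ofPred_eq, hηodd, heven] using hu) hSneg hlarge
  have hslope : ∀ t : ℝ, 0 < t → ∃ u, (⨆ v, L (η v)) - ε * t ≤ L (η u + t • w u) := by
    intro t ht
    obtain ⟨u, hu⟩ := exists_eq_iSup_comp hL (η + t • w)
    have hdist : dist η (η + t • w) ≤ t := by
      rw [dist_self_add_right, norm_smul, Real.norm_of_nonneg ht.le]
      exact mul_le_of_le_one_right ht.le ((ContinuousMap.norm_le _ zero_le_one).2 hw1)
    have hmem : η + t • w ∈ oddMapsEqOn γ S :=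
      ⟨fun u => by simp [hηodd, hwodd, add_comm], fun u hu => by simp [hwS u hu, hηγ hu]⟩
    exact ⟨u, (by gcongr : _ ≤ _).trans ((hmin _ hmem).trans hu.ge)⟩
  obtain ⟨v, hv, hεv⟩ := exists_eq_and_neg_le_apply hderiv hcont (le_iSup_comp hL η) hslope
  exact hεv.not_gt (hw v hv)

lemma PalaisSmale.exists_critical_of_forall_odd [CompleteSpace X] (hPS : PalaisSmale L dL)
    (hderiv : ∀ x, HasFDerivAt L (dL x) x) (hcont : Continuous dL) (heven : ∀ x, L (-x) = L x)
    (hS : IsClosed S) (hSneg : ∀ u ∈ S, -u ∈ S) (hγ : ∀ u, γ (-u) = -γ u) {β : ℝ}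
    (hSβ : ∀ u ∈ S, L (γ u) < β) (hlink : ∀ η ∈ oddMapsEqOn γ S, ∃ u, β ≤ L (η u)) :
    ∃ x, dL x = 0 ∧ β ≤ L x := by
  have hL : Continuous L := continuous_iff_continuousAt.2 fun x => (hderiv x).continuousAt
  have hγS : γ ∈ oddMapsEqOn γ S := ⟨hγ, Set.eqOn_refl _ _⟩
  have : Nonempty K := (hlink γ hγS).nonempty
  have hβ : ∀ η ∈ oddMapsEqOn γ S, β ≤ ⨆ u, L (η u) := fun η hη => by
    obtain ⟨u, hu⟩ := hlink η hη
    exact hu.trans (le_iSup_comp hL η u)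
  have : CompleteSpace (oddMapsEqOn γ S) := isClosed_oddMapsEqOn.completeSpace_coe
  refine hPS.exists_critical_of_forall_norm_le hL hcont (C := ⨆ u, L (γ u)) fun ε hε => ?_
  obtain ⟨⟨η, hη⟩, hle, hmin⟩ := exists_ekeland_point
    (Φ := fun η : oddMapsEqOn γ S => ⨆ u, L (η.1 u))
    ((lowerSemicontinuous_iSup_comp hL).comp continuous_subtype_val)
    ⟨β, Set.forall_mem_range.2 fun η => hβ η.1 η.2⟩ hε ⟨γ, hγS⟩
  obtain ⟨u, hu, hεu⟩ := exists_norm_le_of_forall_iSup_le hderiv hcont heven hS hSneg hη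
    (fun u hu => (hSβ u hu).trans_le (hβ η hη)) hε.le fun ζ hζ => hmin ⟨ζ, hζ⟩
  exact ⟨η u, ⟨hu ▸ hβ η hη, hu ▸ hle⟩, hεu⟩

end MinMax

/-! ### The fountain theorem -/

section SchauderBasis

variable {X : Type*} [NormedAddCommGroup X] [NormedSpace ℝ X] {e : ℕ → X}

lemma linearIndependent_of_unique_expansion
    (he : ∃! a : ℕ → ℝ, Tendsto (fun n => ∑ j ∈ Finset.range n, a j • e j) atTop (𝓝 0)) :
    LinearIndependent ℝ e := by
  rw [linearIndependent_iff]
  intro l hl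
  have hsum : Tendsto (fun n => ∑ j ∈ Finset.range n, l j • e j) atTop (𝓝 0) := by
    rw [Finsupp.linearCombination_apply] at hl
    refine tendsto_const_nhds.congr' ?_
    filter_upwards [eventually_gt_atTop (l.support.sup id)] with n hn
    rw [← hl, Finsupp.sum_of_support_subset _ (fun j hj => Finset.mem_range.2
      ((Finset.le_sup (f := id) hj).trans_lt hn)) _ fun j _ => zero_smul ℝ (e j)]
  exact DFunLike.coe_injective (he.unique hsum (by simp))

lemma finrank_span_image_Iio (he : LinearIndependent ℝ e) (n : ℕ) :
    Module.finrank ℝ (Submodule.span ℝ (e '' Set.Iio n)) = n := by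
  have h := finrank_span_eq_card (he.comp (Fin.val : Fin n → ℕ) Fin.val_injective)
  rwa [Set.range_comp, Fin.range_val, Fintype.card_fin] at h

lemma topologicalClosure_span_range_eq_top
    (he : ∀ x : X, ∃ a : ℕ → ℝ,
      Tendsto (fun n => ∑ j ∈ Finset.range n, a j • e j) atTop (𝓝 x)) :
    (Submodule.span ℝ (Set.range e)).topologicalClosure = ⊤ := by
  refine (Submodule.dense_iff_topologicalClosure_eq_top).1 fun x => ?_
  obtain ⟨a, ha⟩ := he x
  exact mem_closure_of_tendsto ha (.of_forall fun n => Submodule.sum_mem _ fun j _ =>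
    Submodule.smul_mem _ _ (Submodule.subset_span ⟨j, rfl⟩))

lemma surjective_mkQ_domRestrict_span {ι : Type*} {v : ι → X}
    (hv : (Submodule.span ℝ (Set.range v)).topologicalClosure = ⊤) {s : Set ι} (hs : s.Finite) :
    Function.Surjective ((Submodule.span ℝ (v '' sᶜ)).topologicalClosure.mkQ.domRestrict
      (Submodule.span ℝ (v '' s))) := by
  set Y := Submodule.span ℝ (v '' s)
  set Z := (Submodule.span ℝ (v '' sᶜ)).topologicalClosure
  have : FiniteDimensional ℝ Y := .span_of_finite ℝ (hs.image v)
  have hclosed : IsClosed ((Z ⊔ Y : Submodule ℝ X) : Set X) :=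
    Submodule.isClosed_sup_finiteDimensional _ _ (Submodule.isClosed_topologicalClosure _)
  have htop : Z ⊔ Y = ⊤ := by
    refine eq_top_iff.2 (hv ▸ Submodule.topologicalClosure_minimal _ ?_ hclosed)
    rw [← Set.image_univ, ← Set.compl_union_self s, Set.image_union, Submodule.span_union]
    exact sup_le_sup_right (Submodule.le_topologicalClosure _) _
  rw [← LinearMap.range_eq_top, LinearMap.range_domRestrict]
  exact (Submodule.map_mkQ_eq_top _ _).2 htop

lemma surjective_mkQ_domRestrict_span_Iio
    (he : ∀ x : X, ∃ a : ℕ → ℝ,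
      Tendsto (fun n => ∑ j ∈ Finset.range n, a j • e j) atTop (𝓝 x)) (k : ℕ) :
    Function.Surjective ((Submodule.span ℝ (e '' Set.Ici k)).topologicalClosure.mkQ.domRestrict
      (Submodule.span ℝ (e '' Set.Iio k))) := by
  rw [← Set.compl_Iio]
  exact surjective_mkQ_domRestrict_span (topologicalClosure_span_range_eq_top he) (Set.finite_Iio k)

lemma finiteDimensional_quotient_span_Ici
    (he : ∀ x : X, ∃ a : ℕ → ℝ,
      Tendsto (fun n => ∑ j ∈ Finset.range n, a j • e j) atTop (𝓝 x)) (k : ℕ) :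
    FiniteDimensional ℝ (X ⧸ (Submodule.span ℝ (e '' Set.Ici k)).topologicalClosure) :=
  have : FiniteDimensional ℝ (Submodule.span ℝ (e '' Set.Iio k)) :=
    .span_of_finite ℝ ((Set.finite_Iio k).image e)
  .of_surjective _ (surjective_mkQ_domRestrict_span_Iio he k)

lemma finrank_quotient_span_Ici_lt
    (he : ∀ x : X, ∃! a : ℕ → ℝ,
      Tendsto (fun n => ∑ j ∈ Finset.range n, a j • e j) atTop (𝓝 x)) (k : ℕ) :
    Module.finrank ℝ (X ⧸ (Submodule.span ℝ (e '' Set.Ici k)).topologicalClosure) <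
      Module.finrank ℝ (Submodule.span ℝ (e '' Set.Iio (k + 1))) := by
  have hrank := finrank_span_image_Iio (linearIndependent_of_unique_expansion (he 0))
  have : FiniteDimensional ℝ (Submodule.span ℝ (e '' Set.Iio k)) :=
    .span_of_finite ℝ ((Set.finite_Iio k).image e)
  rw [hrank, Nat.lt_succ_iff]
  exact (LinearMap.finrank_le_finrank_of_surjective
    (surjective_mkQ_domRestrict_span_Iio (fun x => (he x).exists) k)).trans_eq (hrank k)

end SchauderBasis

section Fountain

variable {X : Type*} [NormedAddCommGroup X] [NormedSpace ℝ X] [CompleteSpace X]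
  {L : X → ℝ} {dL : X → X →L[ℝ] ℝ}

lemma PalaisSmale.exists_critical_of_finrank_lt (hPS : PalaisSmale L dL)
    (hderiv : ∀ x, HasFDerivAt L (dL x) x) (hcont : Continuous dL) (heven : ∀ x, L (-x) = L x)
    {Y Z : Submodule ℝ X} (hZ : IsClosed (Z : Set X)) [FiniteDimensional ℝ (X ⧸ Z)]
    (hrank : Module.finrank ℝ (X ⧸ Z) < Module.finrank ℝ Y) {ρ r β : ℝ} (hr : 0 < r) (hrρ : r < ρ)
    (hβ : 0 < β) (hLY : ∀ u ∈ Y, ‖u‖ = ρ → L u ≤ 0) (hLZ : ∀ u ∈ Z, ‖u‖ = r → β ≤ L u) :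
    ∃ x, dL x = 0 ∧ β ≤ L x := by
  have : FiniteDimensional ℝ Y := .of_finrank_pos hrank.pos
  have : CompactSpace (Metric.closedBall (0 : Y) ρ) :=
    isCompact_iff_compactSpace.1 (isCompact_closedBall _ _)
  refine hPS.exists_critical_of_forall_odd hderiv hcont heven
    (S := {u : Metric.closedBall (0 : Y) ρ | ‖(u : Y)‖ = ρ})
    (γ := ⟨fun u => ((u : Y) : X), by fun_prop⟩)
    (isClosed_eq (by fun_prop) continuous_const) (fun u hu => by simpa using hu)
    (fun u => by simp) (fun u hu => (hLY _ u.1.2 hu).trans_lt hβ) fun η ⟨hη, hηS⟩ => ?_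
  obtain ⟨u, huZ, hur⟩ := exists_mem_norm_eq_of_odd hZ hrank hr (hr.trans hrρ) η hη
    fun u hu => hηS hu ▸ hrρ.le.trans_eq hu.symm
  exact ⟨u, hLZ _ huZ hur⟩

theorem stmt10_general {Y Z : ℕ → Submodule ℝ X} (hZ : ∀ k, IsClosed (Z k : Set X))
    (hfin : ∀ k, FiniteDimensional ℝ (X ⧸ Z k))
    (hrank : ∀ k, Module.finrank ℝ (X ⧸ Z k) < Module.finrank ℝ (Y k))
    (hderiv : ∀ x, HasFDerivAt L (dL x) x) (hcont : Continuous dL)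
    (heven : ∀ x : X, L (-x) = L x) (hPS : PalaisSmale L dL) {ρ r : ℕ → ℝ}
    (hρr : ∀ k, 0 < r k ∧ r k < ρ k) (hL1 : ∀ k, ∀ u ∈ Y k, ‖u‖ = ρ k → L u ≤ 0)
    (hL2 : Tendsto (fun k => sInf (L '' {u : X | u ∈ Z k ∧ ‖u‖ = r k})) atTop atTop) :
    ∃ u : ℕ → X, (∀ k, dL (u k) = 0) ∧ Tendsto (fun k => L (u k)) atTop atTop := by
  have hlevel : ∀ n : ℕ, ∃ x, dL x = 0 ∧ (n : ℝ) + 1 ≤ L x := by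
    intro n
    have hpos : (0 : ℝ) < n + 1 := by positivity
    obtain ⟨k, hk⟩ := (hL2.eventually_ge_atTop ((n : ℝ) + 1)).exists
    have hbdd : BddBelow (L '' {u : X | u ∈ Z k ∧ ‖u‖ = r k}) := by
      -- the infimum of a set unbounded below is the junk value `0`
      by_contra h
      exact (hpos.trans_le hk).ne' (Real.sInf_of_not_bddBelow h)
    have := hfin k
    exact hPS.exists_critical_of_finrank_lt hderiv hcont heven (hZ k) (hrank k)
      (hρr k).1 (hρr k).2 hpos (hL1 k) fun u hu hur => hk.trans (csInf_le hbdd ⟨u, ⟨hu, hur⟩, rfl⟩)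
  choose u hu hLu using hlevel
  exact ⟨u, hu, tendsto_atTop_mono (fun n => (le_add_of_nonneg_right zero_le_one).trans (hLu n))
    tendsto_natCast_atTop_atTop⟩

end Fountain

/-- Fountain Theorem (Theorem 3.7 of the paper).  The Schauder basis `(e_j)_{j≥1}`
of the paper is encoded as `e : ℕ → X` (Lean index `j` is the paper index `j+1`),
so that the paper's `Y_k = span{e_1,…,e_k}` is `span (e '' Set.Iio k)` and the
paper's `Z_k = cl span{e_j : j ≥ k}` is the closure of `span (e '' Set.Ici (k-1))`;
for each paper index `k ≥ 1` (Lean `k`, arbitrary in `ℕ`) the hypotheses `(L₁)`,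
`(L₂)` are stated with radii `ρ k > r k > 0`. -/
theorem stmt10 {X : Type*} [NormedAddCommGroup X] [NormedSpace ℝ X] [CompleteSpace X]
    (e : ℕ → X)
    (hbasis : ∀ x : X, ∃! a : ℕ → ℝ,
      Tendsto (fun n => ∑ j ∈ Finset.range n, a j • e j) atTop (𝓝 x))
    (L : X → ℝ) (dL : X → X →L[ℝ] ℝ)
    (hderiv : ∀ x, HasFDerivAt L (dL x) x) (hcont : Continuous dL)
    (heven : ∀ x : X, L (-x) = L x)
    (hPS : PalaisSmale L dL)
    (ρ r : ℕ → ℝ)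
    (hρr : ∀ k, 0 < r k ∧ r k < ρ k)
    (hL1 : ∀ k : ℕ, ∀ u ∈ Submodule.span ℝ (e '' Set.Iio (k + 1)), ‖u‖ = ρ k → L u ≤ 0)
    (hL2 : Tendsto (fun k : ℕ => sInf (L '' {u : X |
        u ∈ (Submodule.span ℝ (e '' Set.Ici k)).topologicalClosure ∧ ‖u‖ = r k}))
      atTop atTop) :
    ∃ u : ℕ → X, (∀ k, dL (u k) = 0) ∧ Tendsto (fun k => L (u k)) atTop atTop :=
  stmt10_general (fun _ => Submodule.isClosed_topologicalClosure _)
    (finiteDimensional_quotient_span_Ici fun x => (hbasis x).exists)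
    (finrank_quotient_span_Ici_lt hbasis) hderiv hcont heven hPS hρr hL1 hL2
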